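/- arXiv:1703.00546 — 5 statements merged into one kernel-verified Lean document; each statement's English description precedes it below -/
import Mathlib

section
/- Let H be a complex Hilbert space, let x_1,…,x_n be self-adjoint bounded operators on H, let σ be a partition of {1,…,d}, and set [σ] := ∑_{j : ker(j) ≥ σ} x_{j_1} x_{j_2} ⋯ x_{j_d}, the sum over tuples j ∈ {1,…,n}^d whose kernel partition refines no block of σ apart (i.e., j is constant on each block of σ). Let σ_s ⊆ {1,…,d} be the set of indices lying in singleton blocks of σ and σ_ns its complement. Then ‖[σ]‖ ≤ ‖∑_{j=1}^n x_j‖^{|σ_s|} · ‖∑_{j=1}^n x_j²‖^{|σ_ns|/2}, where ‖·‖ is the operator norm. -/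
section SquareSum

variable {H ι : Type*} [NormedAddCommGroup H] [InnerProductSpace ℂ H] [CompleteSpace H]
  [Fintype ι] {x : ι → H →L[ℂ] H}

/-- The column `(x i)ᵢ` of self-adjoint operators has norm at most `‖∑ i, x i ^ 2‖ ^ (1 / 2)`. -/
lemma sum_norm_sq_apply_le (hx : ∀ i, IsSelfAdjoint (x i)) (h : H) :
    ∑ i, ‖x i h‖ ^ 2 ≤ ‖∑ i, x i ^ 2‖ * ‖h‖ ^ 2 := by
  have key : ∑ i, ‖x i h‖ ^ 2 = RCLike.re (inner ℂ ((∑ i, x i ^ 2) h) h) := by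
    rw [sum_apply, sum_inner, map_sum]
    refine Finset.sum_congr rfl fun i _ => ?_
    rw [pow_two (x i), mul_apply_eq_comp,
      ← ContinuousLinearMap.adjoint_inner_right, (hx i).adjoint_eq]
    exact (inner_self_eq_norm_sq (𝕜 := ℂ) (x i h)).symm
  rw [key]
  calc RCLike.re (inner ℂ ((∑ i, x i ^ 2) h) h)
      ≤ ‖(∑ i, x i ^ 2) h‖ * ‖h‖ := re_inner_le_norm _ _
    _ ≤ (‖∑ i, x i ^ 2‖ * ‖h‖) * ‖h‖ := by gcongr; exact ContinuousLinearMap.le_opNorm _ _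
    _ = _ := by ring

/-- The diagonal of self-adjoint operators `x i` has norm at most `‖∑ i, x i ^ 2‖ ^ (1 / 2)`. -/
lemma sum_norm_sq_apply_apply_le (hx : ∀ i, IsSelfAdjoint (x i)) (g : ι → H) :
    ∑ i, ‖x i (g i)‖ ^ 2 ≤ ‖∑ i, x i ^ 2‖ * ∑ i, ‖g i‖ ^ 2 := by
  rw [Finset.mul_sum]
  refine Finset.sum_le_sum fun i _ => le_trans ?_ (sum_norm_sq_apply_le hx (g i))
  exact Finset.single_le_sum (f := fun k => ‖x k (g i)‖ ^ 2) (fun _ _ => by positivity)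
    (Finset.mem_univ i)

/-- The row `(x i)ᵢ` of self-adjoint operators has norm at most `‖∑ i, x i ^ 2‖ ^ (1 / 2)`. -/
lemma norm_sq_sum_apply_le (hx : ∀ i, IsSelfAdjoint (x i)) (g : ι → H) :
    ‖∑ i, x i (g i)‖ ^ 2 ≤ ‖∑ i, x i ^ 2‖ * ∑ i, ‖g i‖ ^ 2 := by
  set y := ∑ i, x i (g i) with hy
  have inner_le : ‖y‖ ^ 2 ≤ ∑ i, ‖x i y‖ * ‖g i‖ := by
    calc ‖y‖ ^ 2 = RCLike.re (inner ℂ y y) := (inner_self_eq_norm_sq (𝕜 := ℂ) y).symm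
      _ = ∑ i, RCLike.re (inner ℂ (x i y) (g i)) := by
        conv_lhs => rw [hy, inner_sum, map_sum, ← hy]
        refine Finset.sum_congr rfl fun i _ => ?_
        rw [← ContinuousLinearMap.adjoint_inner_left, (hx i).adjoint_eq]
      _ ≤ _ := Finset.sum_le_sum fun i _ => re_inner_le_norm _ _
  have cauchy := Finset.sum_mul_sq_le_sq_mul_sq Finset.univ (fun i => ‖x i y‖) (fun i => ‖g i‖)
  have column := sum_norm_sq_apply_le hx y
  have nonneg : 0 ≤ ∑ i, ‖g i‖ ^ 2 := by positivity
  rcases eq_or_ne y 0 with h0 | h0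
  · rw [h0, norm_zero, zero_pow two_ne_zero]
    positivity
  · have pos : 0 < ‖y‖ ^ 2 := by positivity
    refine le_of_mul_le_mul_left ?_ pos
    calc ‖y‖ ^ 2 * ‖y‖ ^ 2 = (‖y‖ ^ 2) ^ 2 := by ring
      _ ≤ (∑ i, ‖x i y‖ * ‖g i‖) ^ 2 := by gcongr
      _ ≤ _ := cauchy
      _ ≤ (‖∑ i, x i ^ 2‖ * ‖y‖ ^ 2) * ∑ i, ‖g i‖ ^ 2 := by gcongr
      _ = _ := by ring

end SquareSum

section Transfer

variable {H ι Q : Type*} [NormedAddCommGroup H] [InnerProductSpace ℂ H]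
  [Fintype ι] [DecidableEq ι] [DecidableEq Q]

/-- Vectors indexed by the labels of the open blocks, obtained by reading a word of blocks from
the right. `P` is the set of blocks occurring to the left of the word; a state `s` assigns
a label to each open block and `none` to every other block. -/
noncomputable def transferVector (x : ι → H →L[ℂ] H) (ξ : H) : Finset Q → List Q → (Q → Option ι) → H
  | _, [], s => open Classical in if s = fun _ => none then ξ else 0
  | P, q :: t, s => ∑ i, if s q = (if q ∈ P then some i else none) then
      x i (transferVector x ξ (insert q P) t
        (Function.update s q (if q ∈ t then some i else none))) else 0

/-- The bound on the norm of the transfer of a word: a factor `a` for each letter that occurs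
once and is not in `P`, and a factor `b` for every other letter. -/
noncomputable def transferBound (a b : ℝ) : Finset Q → List Q → ℝ
  | _, [] => 1
  | P, q :: t => (if q ∉ P ∧ q ∉ t then a else b) * transferBound a b (insert q P) t

lemma transferBound_nonneg {a b : ℝ} (ha : 0 ≤ a) (hb : 0 ≤ b) (P : Finset Q) (L : List Q) :
    0 ≤ transferBound a b P L := by
  induction L generalizing P with
  | nil => simp [transferBound]
  | cons q t ih =>
    rw [transferBound]
    have := ih (insert q P)
    split_ifs <;> positivity

lemma transferBound_eq (a b : ℝ) (P : Finset Q) (L : List Q) :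
    transferBound a b P L =
      a ^ L.countP (fun q => decide (q ∉ P ∧ L.count q = 1)) *
        b ^ L.countP (fun q => decide (¬ (q ∉ P ∧ L.count q = 1))) := by
  induction L generalizing P with
  | nil => simp [transferBound]
  | cons q t ih =>
    have iff_tail : ∀ r ∈ t, (r ∉ P ∧ (q :: t).count r = 1) ↔
        (r ∉ insert q P ∧ t.count r = 1) := by
      intro r hr
      have := List.count_pos_iff.2 hr
      by_cases h : q = r
      · subst h
        simp [List.count_cons_self, this.ne']
      · have h' : r ≠ q := fun e => h e.symm
        simp [List.count_cons_of_ne h, h']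
    have iff_head : (q ∉ P ∧ (q :: t).count q = 1) ↔ (q ∉ P ∧ q ∉ t) := by
      simp [List.count_cons_self, List.count_eq_zero]
    rw [transferBound, ih, List.countP_cons, List.countP_cons]
    rw [List.countP_congr (p := fun r => decide (r ∉ P ∧ (q :: t).count r = 1))
        (q := fun r => decide (r ∉ insert q P ∧ t.count r = 1))
        (fun r hr => by simpa only [decide_eq_true_eq] using iff_tail r hr),
      List.countP_congr (p := fun r => decide (¬ (r ∉ P ∧ (q :: t).count r = 1)))
        (q := fun r => decide (¬ (r ∉ insert q P ∧ t.count r = 1)))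
        (fun r hr => by simpa only [decide_eq_true_eq] using not_congr (iff_tail r hr))]
    simp only [decide_eq_true_eq, iff_head]
    by_cases h : q ∉ P ∧ q ∉ t
    · simp only [h, not_true, if_true, if_false, pow_succ, add_zero, not_false_eq_true,
        and_self]
      ring
    · rw [if_neg h, if_neg h, if_pos h, pow_succ, add_zero]
      ring

/-- One step of the transfer, acting on the label of a single block. -/
lemma sum_norm_sq_step_le [CompleteSpace H] {x : ι → H →L[ℂ] H}
    (hx : ∀ i, IsSelfAdjoint (x i)) (p r : Prop) [Decidable p] [Decidable r]
    (g : Option ι → H) :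
    ∑ o, ‖∑ i, if o = (if p then some i else none) then
        x i (g (if r then some i else none)) else 0‖ ^ 2 ≤
      (if ¬ p ∧ ¬ r then ‖∑ i, x i‖ else √‖∑ i, x i ^ 2‖) ^ 2 * ∑ o, ‖g o‖ ^ 2 := by
  have hsq : √‖∑ i, x i ^ 2‖ ^ 2 = ‖∑ i, x i ^ 2‖ := Real.sq_sqrt (norm_nonneg _)
  have some_le : ∑ i, ‖g (some i)‖ ^ 2 ≤ ∑ o, ‖g o‖ ^ 2 := by
    rw [Fintype.sum_option]
    exact le_add_of_nonneg_left (by positivity)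
  have none_le : ‖g none‖ ^ 2 ≤ ∑ o, ‖g o‖ ^ 2 :=
    Finset.single_le_sum (f := fun o => ‖g o‖ ^ 2) (fun _ _ => by positivity) (Finset.mem_univ _)
  by_cases hp : p <;> by_cases hr : r <;>
    simp only [hp, hr, Fintype.sum_option, if_true, if_false, not_true, not_false_eq_true,
      and_self, and_true, and_false, reduceCtorEq, Finset.sum_const_zero, norm_zero,
      Option.some.injEq, Finset.sum_ite_eq, Finset.mem_univ, hsq, ne_eq, OfNat.ofNat_ne_zero,
      zero_pow, zero_add, add_zero] <;> rw [← Fintype.sum_option (fun o => ‖g o‖ ^ 2)]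
  · exact (sum_norm_sq_apply_apply_le hx _).trans (by gcongr)
  · exact (sum_norm_sq_apply_le hx _).trans (by gcongr)
  · exact (norm_sq_sum_apply_le hx _).trans (by gcongr)
  · rw [← sum_apply]
    calc ‖(∑ i, x i) (g none)‖ ^ 2 ≤ (‖∑ i, x i‖ * ‖g none‖) ^ 2 := by
          gcongr; exact ContinuousLinearMap.le_opNorm _ _
      _ = ‖∑ i, x i‖ ^ 2 * ‖g none‖ ^ 2 := by ring
      _ ≤ _ := by gcongr

lemma sum_eq_sum_sum_funSplitAt_symm {α : Type*} [Fintype Q] [Fintype α] (q : Q)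
    (f : (Q → α) → ℝ) :
    ∑ s, f s = ∑ c : {j // j ≠ q} → α, ∑ o, f ((Equiv.funSplitAt q α).symm (o, c)) := by
  rw [← Equiv.sum_comp (Equiv.funSplitAt q α).symm f, Fintype.sum_prod_type_right]

lemma funSplitAt_symm_self {α : Type*} (q : Q) (o : α) (c : {j // j ≠ q} → α) :
    (Equiv.funSplitAt q α).symm (o, c) q = o := by
  simp [Equiv.funSplitAt]

lemma update_funSplitAt_symm {α : Type*} (q : Q) (o o' : α) (c : {j // j ≠ q} → α) :
    Function.update ((Equiv.funSplitAt q α).symm (o, c)) q o' =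
      (Equiv.funSplitAt q α).symm (o', c) := by
  ext j
  by_cases h : j = q
  · subst h; simp [Equiv.funSplitAt]
  · simp [Equiv.funSplitAt, h]

lemma sum_norm_sq_transferVector_le [CompleteSpace H] [Fintype Q] {x : ι → H →L[ℂ] H}
    (hx : ∀ i, IsSelfAdjoint (x i)) (ξ : H) (P : Finset Q) (L : List Q) :
    ∑ s, ‖transferVector x ξ P L s‖ ^ 2 ≤
      transferBound ‖∑ i, x i‖ (√‖∑ i, x i ^ 2‖) P L ^ 2 * ‖ξ‖ ^ 2 := by
  induction L generalizing P with
  | nil =>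
    rw [Finset.sum_eq_single (fun _ => none)]
    · simp [transferVector, transferBound]
    · intro s _ hs
      simp [transferVector, hs]
    · simp
  | cons q t ih =>
    rw [transferBound, mul_pow, mul_assoc]
    refine le_trans ?_ (mul_le_mul_of_nonneg_left (ih (insert q P)) (sq_nonneg _))
    rw [sum_eq_sum_sum_funSplitAt_symm q, sum_eq_sum_sum_funSplitAt_symm q, Finset.mul_sum]
    refine Finset.sum_le_sum fun c _ => ?_
    simp only [transferVector, funSplitAt_symm_self, update_funSplitAt_symm]
    exact sum_norm_sq_step_le hx (q ∈ P) (q ∈ t)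
      (fun o => transferVector x ξ (insert q P) t ((Equiv.funSplitAt q (Option ι)).symm (o, c)))

lemma transferVector_eq_sum [Fintype Q] (x : ι → H →L[ℂ] H) (ξ : H) (P : Finset Q) (L : List Q)
    (hPL : ∀ q, q ∈ P ∨ q ∈ L) (u : Q → ι) :
    transferVector x ξ P L (fun q => if q ∈ P ∧ q ∈ L then some (u q) else none) =
      ∑ v : Q → ι with ∀ q ∈ P, v q = u q, (L.map fun q => x (v q)).prod ξ := by
  induction L generalizing P u with
  | nil =>
    have : (Finset.univ.filter fun v : Q → ι => ∀ q ∈ P, v q = u q) = {u} := by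
      ext v
      simp only [List.not_mem_nil, or_false] at hPL
      simp [hPL, funext_iff]
    rw [this]
    simp [transferVector]
  | cons q t ih =>
    rw [transferVector, ← Finset.sum_fiberwise _ (fun v : Q → ι => v q)]
    refine Finset.sum_congr rfl fun i _ => ?_
    have hcond : ((if q ∈ P ∧ q ∈ q :: t then some (u q) else none) =
        (if q ∈ P then some i else none)) ↔ (q ∈ P → u q = i) := by
      by_cases h : q ∈ P <;> simp [h]
    simp only [hcond]
    by_cases h : q ∈ P → u q = i
    · rw [if_pos h]
      have hstate : (Function.update
          (fun r => if r ∈ P ∧ r ∈ q :: t then some (u r) else none) q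
          (if q ∈ t then some i else none)) =
          fun r => if r ∈ insert q P ∧ r ∈ t then some (Function.update u q i r) else none := by
        ext1 r
        by_cases hr : r = q
        · subst hr; simp
        · simp [hr]
      rw [hstate, ih (insert q P) (fun r => by have := hPL r; simp at this ⊢; tauto), map_sum,
        Finset.filter_filter]
      have hset : ∀ v : Q → ι, (∀ r ∈ insert q P, v r = Function.update u q i r) ↔
          ((∀ r ∈ P, v r = u r) ∧ v q = i) := by
        intro v
        rw [Finset.forall_mem_insert, Function.update_self, and_comm]
        refine and_congr_left fun hv => forall₂_congr fun r hrP => ?_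
        by_cases hr : r = q
        · subst hr; simp [h hrP]
        · simp [hr]
      simp only [hset]
      refine Finset.sum_congr rfl fun v hv => ?_
      simp [(Finset.mem_filter.1 hv).2.2]
    · rw [if_neg h]
      push Not at h
      rw [Finset.filter_filter, Finset.filter_false_of_mem, Finset.sum_empty]
      rintro v - ⟨hv, hvi⟩
      exact h.2 ((hv q h.1).symm.trans hvi)

/-- The norm of a sum over all labelings of the letters of a word. -/
lemma norm_sum_prod_map_le [CompleteSpace H] [Fintype Q] {x : ι → H →L[ℂ] H}
    (hx : ∀ i, IsSelfAdjoint (x i)) (L : List Q) (hL : ∀ q, q ∈ L) :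
    ‖∑ v : Q → ι, (L.map fun q => x (v q)).prod‖ ≤
      transferBound ‖∑ i, x i‖ (√‖∑ i, x i ^ 2‖) ∅ L := by
  have hnonneg := transferBound_nonneg (norm_nonneg (∑ i, x i))
    (Real.sqrt_nonneg ‖∑ i, x i ^ 2‖) ∅ L
  refine ContinuousLinearMap.opNorm_le_bound _ hnonneg fun ξ => ?_
  rcases isEmpty_or_nonempty (Q → ι) with hempty | ⟨⟨u⟩⟩
  · simp only [Finset.univ_eq_empty, Finset.sum_empty, zero_apply, norm_zero]
    positivity
  · have heq := transferVector_eq_sum x ξ ∅ L (fun q => Or.inr (hL q)) u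
    simp only [Finset.notMem_empty, false_and, if_false, false_implies, implies_true,
      Finset.filter_true] at heq
    rw [sum_apply, ← heq]
    refine le_of_sq_le_sq ?_ (by positivity)
    rw [mul_pow]
    refine le_trans ?_ (sum_norm_sq_transferVector_le hx ξ ∅ L)
    exact Finset.single_le_sum (f := fun s => ‖transferVector x ξ ∅ L s‖ ^ 2)
      (fun _ _ => by positivity) (Finset.mem_univ _)

end Transfer

/-- Tuples constant on the blocks of a setoid are functions on the quotient. -/
lemma finsum_mem_le_ker_eq_sum {α ι M : Type*} [Finite α] [Fintype ι] [AddCommMonoid M]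
    (σ : Setoid α) [Fintype (Quotient σ → ι)] (f : (α → ι) → M) :
    ∑ᶠ j ∈ {j : α → ι | σ ≤ Setoid.ker j}, f j =
      ∑ v : Quotient σ → ι, f (fun k => v (Quotient.mk σ k)) := by
  have hrange : {j : α → ι | σ ≤ Setoid.ker j} =
      Set.range fun (v : Quotient σ → ι) k => v (Quotient.mk σ k) := by
    ext j
    constructor
    · intro hj
      exact ⟨Quotient.lift j fun a b h => hj h, rfl⟩
    · rintro ⟨v, rfl⟩ a b h
      exact congrArg v (Quotient.sound h)
  rw [hrange, finsum_mem_range, finsum_eq_sum_of_fintype]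
  intro v w h
  ext q
  induction q using Quotient.inductionOn with
  | h k => exact congrFun h k

lemma countP_finRange_eq_card {d : ℕ} (p : Fin d → Prop) [DecidablePred p] :
    (List.finRange d).countP (fun k => decide (p k)) = Nat.card {k : Fin d | p k} := by
  rw [Set.coe_ofPred, Nat.card_eq_fintype_card, Fintype.card_subtype,
    List.countP_eq_length_filter]
  rfl

lemma count_map_mk_finRange_eq_one_iff {d : ℕ} (σ : Setoid (Fin d)) [DecidableEq (Quotient σ)]
    (k : Fin d) :
    ((List.finRange d).map (Quotient.mk σ)).count (Quotient.mk σ k) = 1 ↔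
      ∀ l, σ k l → l = k := by
  have hcard : ((List.finRange d).map (Quotient.mk σ)).count (Quotient.mk σ k) =
      Nat.card {l : Fin d | Quotient.mk σ l = Quotient.mk σ k} := by
    rw [List.count, List.countP_map, ← countP_finRange_eq_card]
    rfl
  rw [hcard, Nat.card_coe_set_eq, Set.ncard_eq_one]
  constructor
  · rintro ⟨a, ha⟩ l hl
    have hl' : l ∈ ({a} : Set (Fin d)) := ha ▸ Quotient.sound (σ.symm hl)
    have hk : k ∈ ({a} : Set (Fin d)) := ha ▸ (rfl : Quotient.mk σ k = Quotient.mk σ k)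
    exact hl'.trans hk.symm
  · intro h
    refine ⟨k, Set.ext fun l => ⟨fun hl => h l (σ.symm (Quotient.exact hl)), ?_⟩⟩
    rintro rfl
    rfl

/-- Pisier-type norm estimate for a full partition sum of self-adjoint operators:
for a partition `σ` of `{1,…,d}` (modeled as `Setoid (Fin d)`) and self-adjoint
bounded operators `x 1, …, x n` on a complex Hilbert space `H`,
`‖[σ]‖ ≤ ‖∑ x j‖ ^ |σ_s| * ‖∑ x j ^ 2‖ ^ (|σ_ns| / 2)`, where
`[σ] = ∑_{j : ker j ≥ σ} x_{j 1} ⋯ x_{j d}` (the sum over tuples constant on each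
block of `σ`), `σ_s` is the set of indices in singleton blocks of `σ`, and `σ_ns`
its complement. -/
theorem norm_fullPartitionSum_le {H : Type*} [NormedAddCommGroup H]
    [InnerProductSpace ℂ H] [CompleteSpace H] (n d : ℕ) (hd : 1 ≤ d)
    (x : Fin n → H →L[ℂ] H) (hx : ∀ j, IsSelfAdjoint (x j))
    (σ : Setoid (Fin d)) :
    ‖∑ᶠ j ∈ {j : Fin d → Fin n | σ ≤ Setoid.ker j},
        ((List.finRange d).map (fun k => x (j k))).prod‖ ≤
      ‖∑ j, x j‖ ^ (Nat.card {k : Fin d | ∀ l, σ k l → l = k}) *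
        ‖∑ j, (x j) ^ 2‖ ^
          ((Nat.card {k : Fin d | ¬ ∀ l, σ k l → l = k} : ℝ) / 2) := by
  classical
  rw [finsum_mem_le_ker_eq_sum σ fun j => ((List.finRange d).map fun k => x (j k)).prod]
  have hbound := norm_sum_prod_map_le hx ((List.finRange d).map (Quotient.mk σ)) fun q => by
    induction q using Quotient.inductionOn with
    | h k => exact List.mem_map_of_mem (List.mem_finRange k)
  simp only [List.map_map, Function.comp_def] at hbound
  refine hbound.trans_eq ?_
  rw [transferBound_eq, List.countP_map, List.countP_map]
  simp only [Function.comp_def, Finset.notMem_empty, not_false_eq_true, true_and,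
    count_map_mk_finRange_eq_one_iff]
  rw [countP_finRange_eq_card, countP_finRange_eq_card, Real.sqrt_eq_rpow, ← Real.rpow_natCast,
    ← Real.rpow_natCast (_ ^ _), ← Real.rpow_mul (norm_nonneg _), Real.rpow_natCast]
  congr 2
  ring
end

section
/- Let H be a complex Hilbert space, 1 ≤ d ≤ n, and let x_1,…,x_n be positive bounded operators on H. Then ‖P_d(x_1,…,x_n)‖ ≤ (d!·n^d·(n−d)!/n!)·‖P_1(x_1,…,x_n)‖^d, where ‖·‖ is the operator norm. -/
open scoped BigOperators

/-- The average product
`P_d(x_1,…,x_n) = ((n-d)!/n!) ∑_{i injective} x_{i 1} x_{i 2} ⋯ x_{i d}`,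
the sum running over all `d`-tuples of pairwise distinct indices in `{1,…,n}`. -/
noncomputable def avgProd {A : Type*} [Ring A] [Module ℝ A] (n d : ℕ)
    (x : Fin n → A) : A :=
  ((Nat.factorial (n - d) : ℝ) / (Nat.factorial n : ℝ)) •
    ∑ i ∈ Finset.univ.filter (fun i : Fin d → Fin n => Function.Injective i),
      ((List.finRange d).map (fun k => x (i k))).prod

/-- In a C⋆-algebra, `-b ≤ a ≤ b` with `a` self-adjoint and `b` positive forces `‖a‖ ≤ ‖b‖`. -/
lemma CStarAlgebra.norm_le_norm_of_neg_le_of_le {A : Type*} [CStarAlgebra A] [PartialOrder A]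
    [StarOrderedRing A] {a b : A} (ha : IsSelfAdjoint a) (hb : 0 ≤ b) (hneg : -b ≤ a)
    (hle : a ≤ b) : ‖a‖ ≤ ‖b‖ := by
  nontriviality A
  have hb_le : b ≤ algebraMap ℝ A ‖b‖ := hb.isSelfAdjoint.le_algebraMap_norm_self
  have upper : ∀ c : A, IsSelfAdjoint c → c ≤ b → ∀ r ∈ spectrum ℝ c, r ≤ ‖b‖ := fun c hc hcb =>
    (le_algebraMap_iff_spectrum_le (a := c) (r := ‖b‖)).1 (hcb.trans hb_le)
  rcases CStarAlgebra.norm_or_neg_norm_mem_spectrum ha with h | h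
  · exact upper a ha hle _ h
  · refine upper (-a) ha.neg (neg_le.1 hneg) _ ?_
    rw [← spectrum.neg_eq]
    simpa using h

/-- Changing the signs of the terms of a sum of positive elements does not increase its norm. -/
lemma CStarAlgebra.norm_sum_units_smul_le {A ι : Type*} [CStarAlgebra A] [PartialOrder A]
    [StarOrderedRing A] [Fintype ι] {x : ι → A} (hx : ∀ j, 0 ≤ x j) (e : ι → ℤˣ) :
    ‖∑ j, (((e j : ℤ) : ℝ)) • x j‖ ≤ ‖∑ j, x j‖ := by
  refine CStarAlgebra.norm_le_norm_of_neg_le_of_le ?_ (Finset.sum_nonneg fun j _ => hx j) ?_ ?_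
  · exact isSelfAdjoint_sum _ fun j _ => (IsSelfAdjoint.all _).smul (hx j).isSelfAdjoint
  · rw [← Finset.sum_neg_distrib]
    refine Finset.sum_le_sum fun j _ => ?_
    rcases Int.units_eq_one_or (e j) with h | h <;> simp [h, (neg_nonpos.2 (hx j)).trans (hx j)]
  · refine Finset.sum_le_sum fun j _ => ?_
    rcases Int.units_eq_one_or (e j) with h | h <;> simp [h, (neg_nonpos.2 (hx j)).trans (hx j)]

/-- Orthogonality of the coordinates of a uniformly random sign vector. -/
lemma sum_units_mul_units {ι : Type*} [Fintype ι] [DecidableEq ι] (a b : ι) :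
    ∑ w : ι → ℤˣ, ((w a : ℤ) : ℝ) * ((w b : ℤ) : ℝ) =
      if a = b then (2 : ℝ) ^ Fintype.card ι else 0 := by
  split_ifs with h
  · subst h
    have : ∀ w : ι → ℤˣ, ((w a : ℤ) : ℝ) * ((w a : ℤ) : ℝ) = 1 := fun w => by
      rcases Int.units_eq_one_or (w a) with h | h <;> simp [h]
    simp [this]
  · have key := Equiv.sum_comp (Equiv.mulLeft (Pi.mulSingle a (-1) : ι → ℤˣ))
      fun w : ι → ℤˣ => ((w a : ℤ) : ℝ) * ((w b : ℤ) : ℝ)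
    simp [Pi.mulSingle_eq_of_ne (Ne.symm h)] at key
    linarith

/-- Averaging over signs detects the tuples `i` that are invariant under `σ`. -/
lemma sum_units_prod_perm {ι κ : Type*} [Fintype ι] [DecidableEq ι] [Fintype κ] [DecidableEq κ]
    (σ : Equiv.Perm κ) (i : κ → ι) :
    ∑ v : κ → ι → ℤˣ, ∏ k, (((v k (i k) * v (σ k) (i k) : ℤˣ) : ℤ) : ℝ) =
      ∏ k, if i (σ k) = i k then (2 : ℝ) ^ Fintype.card ι else 0 := by
  have reindex : ∀ v : κ → ι → ℤˣ,
      ∏ k, (((v k (i k) * v (σ k) (i k) : ℤˣ) : ℤ) : ℝ) =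
        ∏ k, ((v k (i k) : ℤ) : ℝ) * ((v k (i (σ.symm k)) : ℤ) : ℝ) := fun v => by
    simp only [Units.val_mul, Int.cast_mul, Finset.prod_mul_distrib]
    congr 1
    rw [← Equiv.prod_comp σ fun k => ((v k (i (σ.symm k)) : ℤ) : ℝ)]
    simp
  simp only [reindex]
  rw [← Fintype.prod_sum fun k (w : ι → ℤˣ) =>
    ((w (i k) : ℤ) : ℝ) * ((w (i (σ.symm k)) : ℤ) : ℝ)]
  simp only [sum_units_mul_units]
  rw [← Equiv.prod_comp σ]
  simp

/-- The signed count of the permutations fixing a tuple is the indicator of injectivity. -/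
lemma sum_sign_mul_prod_ite {ι κ : Type*} [DecidableEq ι] [Fintype κ] [DecidableEq κ]
    (i : κ → ι) [Decidable (Function.Injective i)] (c : ℝ) :
    ∑ σ : Equiv.Perm κ, ((Equiv.Perm.sign σ : ℤ) : ℝ) * ∏ k, (if i (σ k) = i k then c else 0) =
      if Function.Injective i then c ^ Fintype.card κ else 0 := by
  have hdet := Matrix.det_apply' (Matrix.of fun k l => if i k = i l then c else 0)
  simp only [Matrix.of_apply] at hdet
  rw [← hdet]
  split_ifs with h
  · have : (Matrix.of fun k l => if i k = i l then c else 0) = Matrix.diagonal fun _ : κ => c := by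
      ext k l
      simp [Matrix.diagonal_apply, h.eq_iff]
    simp [this]
  · simp only [Function.Injective, not_forall] at h
    obtain ⟨a, b, hab, hne⟩ := h
    refine Matrix.det_zero_of_row_eq hne ?_
    ext l
    simp [hab]

/-- Expansion of an ordered product of linear combinations. -/
lemma prod_map_sum_smul {A : Type*} [Ring A] [Algebra ℝ A] {n d : ℕ}
    (c : Fin d → Fin n → ℝ) (x : Fin n → A) :
    ((List.finRange d).map fun k => ∑ j, c k j • x j).prod =
      ∑ i : Fin d → Fin n, (∏ k, c k (i k)) • ((List.finRange d).map fun k => x (i k)).prod := by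
  have h := (MultilinearMap.mkPiAlgebraFin ℝ d A).map_sum fun k j => c k j • x j
  simp only [MultilinearMap.map_smul_univ (MultilinearMap.mkPiAlgebraFin ℝ d A),
    MultilinearMap.mkPiAlgebraFin_apply, List.ofFn_eq_map] at h
  exact h

/-- The sum over injective tuples as a signed sum, over permutations, of averages over signs of
products of sign-changed sums. -/
lemma sum_injective_eq_sum_perm {A : Type*} [Ring A] [Algebra ℝ A] (n d : ℕ) (x : Fin n → A) :
    ((2 : ℝ) ^ n) ^ d • ∑ i ∈ Finset.univ.filter (fun i : Fin d → Fin n => Function.Injective i),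
        ((List.finRange d).map (fun k => x (i k))).prod =
      ∑ σ : Equiv.Perm (Fin d), ((Equiv.Perm.sign σ : ℤ) : ℝ) • ∑ v : Fin d → Fin n → ℤˣ,
        ((List.finRange d).map
          fun k => ∑ j, (((v k j * v (σ k) j : ℤˣ) : ℤ) : ℝ) • x j).prod := by
  have inner : ∀ σ : Equiv.Perm (Fin d), ∑ v : Fin d → Fin n → ℤˣ, ((List.finRange d).map
      fun k => ∑ j, (((v k j * v (σ k) j : ℤˣ) : ℤ) : ℝ) • x j).prod =
      ∑ i : Fin d → Fin n, (∏ k, if i (σ k) = i k then (2 : ℝ) ^ n else 0) •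
        ((List.finRange d).map fun k => x (i k)).prod := fun σ => by
    simp_rw [prod_map_sum_smul (fun k j => (((_ : ℤˣ) : ℤ) : ℝ)) x]
    rw [Finset.sum_comm]
    refine Finset.sum_congr rfl fun i _ => ?_
    rw [← Finset.sum_smul, sum_units_prod_perm, Fintype.card_fin]
  simp_rw [inner, Finset.smul_sum, smul_smul]
  rw [Finset.sum_comm, Finset.sum_filter]
  refine Finset.sum_congr rfl fun i _ => ?_
  rw [← Finset.sum_smul, sum_sign_mul_prod_ite, Fintype.card_fin, ite_smul, zero_smul]

/-- The sum over injective `d`-tuples of products of positive elements is bounded by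
`d! ‖∑ x_j‖^d`. -/
lemma CStarAlgebra.norm_sum_injective_prod_le {A : Type*} [CStarAlgebra A] [PartialOrder A]
    [StarOrderedRing A] {n d : ℕ} (hd : 1 ≤ d) {x : Fin n → A} (hx : ∀ j, 0 ≤ x j) :
    ‖∑ i ∈ Finset.univ.filter (fun i : Fin d → Fin n => Function.Injective i),
        ((List.finRange d).map (fun k => x (i k))).prod‖ ≤
      (Nat.factorial d : ℝ) * ‖∑ j, x j‖ ^ d := by
  have hterm : ∀ (σ : Equiv.Perm (Fin d)) (v : Fin d → Fin n → ℤˣ), ‖((List.finRange d).map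
      fun k => ∑ j, (((v k j * v (σ k) j : ℤˣ) : ℤ) : ℝ) • x j).prod‖ ≤ ‖∑ j, x j‖ ^ d :=
    fun σ v => by
      refine (List.norm_prod_le' (by simp; omega)).trans ?_
      rw [List.map_map, ← List.ofFn_eq_map, List.prod_ofFn]
      refine (Finset.prod_le_prod (fun k _ => norm_nonneg _) fun k _ =>
        CStarAlgebra.norm_sum_units_smul_le hx fun j => v k j * v (σ k) j).trans_eq ?_
      simp
  have hscaled := congrArg norm (sum_injective_eq_sum_perm n d x)
  rw [norm_smul, Real.norm_of_nonneg (by positivity)] at hscaled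
  have hbound : ((2 : ℝ) ^ n) ^ d *
      ‖∑ i ∈ Finset.univ.filter (fun i : Fin d → Fin n => Function.Injective i),
        ((List.finRange d).map (fun k => x (i k))).prod‖ ≤
      ((2 : ℝ) ^ n) ^ d * ((Nat.factorial d : ℝ) * ‖∑ j, x j‖ ^ d) := by
    rw [hscaled]
    refine (norm_sum_le_of_le (n := fun _ => ((2 : ℝ) ^ n) ^ d * ‖∑ j, x j‖ ^ d) _
      fun σ _ => ?_).trans_eq ?_
    · have hsign : ‖((Equiv.Perm.sign σ : ℤ) : ℝ)‖ = 1 := by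
        rcases Int.units_eq_one_or (Equiv.Perm.sign σ) with h | h <;> simp [h]
      rw [norm_smul, hsign, one_mul]
      refine (norm_sum_le_of_le _ fun v _ => hterm σ v).trans_eq ?_
      simp
    · simp [Fintype.card_perm]
      ring
  exact le_of_mul_le_mul_left hbound (by positivity)

lemma avgProd_one {A : Type*} [Ring A] [Module ℝ A] {n : ℕ} (hn : 1 ≤ n) (x : Fin n → A) :
    avgProd n 1 x = (n : ℝ)⁻¹ • ∑ j, x j := by
  have hsum : ∑ i : Fin 1 → Fin n, x (i 0) = ∑ j, x j :=
    Equiv.sum_comp (Equiv.funUnique (Fin 1) (Fin n)) x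
  have hfact : (Nat.factorial (n - 1) : ℝ) / (Nat.factorial n : ℝ) = (n : ℝ)⁻¹ := by
    obtain ⟨m, rfl⟩ : ∃ m, n = m + 1 := ⟨n - 1, by omega⟩
    have : (Nat.factorial m : ℝ) ≠ 0 := by positivity
    rw [Nat.factorial_succ, Nat.add_sub_cancel]
    push_cast
    field_simp
  rw [avgProd, hfact, Finset.filter_true_of_mem fun i _ => Function.injective_of_subsingleton i]
  simp [List.finRange_succ, hsum]

/-- Dimension-free noncommutative AGM inequality (norm version, with explicit
constant): for positive bounded operators `x_1, …, x_n` on a complex Hilbert space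
and `1 ≤ d ≤ n`,
`‖P_d(x_1,…,x_n)‖ ≤ (d! n^d (n-d)!/n!) ‖P_1(x_1,…,x_n)‖^d`. -/
theorem norm_avgProd_le {H : Type*} [NormedAddCommGroup H]
    [InnerProductSpace ℂ H] [CompleteSpace H] (n d : ℕ) (hd : 1 ≤ d) (hdn : d ≤ n)
    (x : Fin n → H →L[ℂ] H) (hx : ∀ j, (x j).IsPositive) :
    ‖avgProd n d x‖ ≤
      ((Nat.factorial d : ℝ) * (n : ℝ) ^ d * (Nat.factorial (n - d) : ℝ) /
          (Nat.factorial n : ℝ)) * ‖avgProd n 1 x‖ ^ d := by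
  have hn : (n : ℝ) ≠ 0 := by
    have : n ≠ 0 := by omega
    exact_mod_cast this
  have hpos : ∀ j, 0 ≤ x j := fun j => (ContinuousLinearMap.nonneg_iff_isPositive _).2 (hx j)
  rw [avgProd_one (hd.trans hdn), avgProd, norm_smul, norm_smul,
    Real.norm_of_nonneg (by positivity), Real.norm_of_nonneg (by positivity), mul_pow, inv_pow]
  refine (mul_le_mul_of_nonneg_left (CStarAlgebra.norm_sum_injective_prod_le hd hpos)
    (by positivity)).trans_eq ?_
  field_simp
end

section
/- Let H be a complex Hilbert space, 1 ≤ d ≤ n, and let x_1,…,x_n be positive bounded operators on H satisfying ∑_{i=1}^n x_i = n·1 (n times the identity operator). Set a_i := x_i − 1. Then P_d(x_1,…,x_n) = 1 + ∑_{k=1}^{d} binom(d,k)·P_k(a_1,…,a_n). -/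
open scoped BigOperators

/-- The average of `F` over all permutations of `Fin n`. -/
noncomputable def permAverage {A : Type*} [AddCommGroup A] [Module ℝ A] (n : ℕ)
    (F : Equiv.Perm (Fin n) → A) : A :=
  ((n.factorial : ℝ)⁻¹) • ∑ σ, F σ

theorem permAverage_add {A : Type*} [AddCommGroup A] [Module ℝ A] {n : ℕ}
    (F G : Equiv.Perm (Fin n) → A) :
    permAverage n (fun σ => F σ + G σ) = permAverage n F + permAverage n G := by
  simp only [permAverage, Finset.sum_add_distrib, smul_add]

/-- Any two injective families of the same shape in a finite type differ by a permutation. -/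
theorem exists_perm_comp_eq {ι α : Type*} [Finite α] {f g : ι → α}
    (hf : Function.Injective f) (hg : Function.Injective g) :
    ∃ τ : Equiv.Perm α, ∀ k, τ (f k) = g k := by
  classical
  let e : {a // a ∈ Set.range f} ≃ {a // a ∈ Set.range g} :=
    (Equiv.ofInjective f hf).symm.trans (Equiv.ofInjective g hg)
  refine ⟨e.extendSubtype, fun k => ?_⟩
  rw [Equiv.extendSubtype_apply_of_mem e (f k) ⟨k, rfl⟩]
  simp [e, Equiv.ofInjective_symm_apply]

/-- Averaging over injective tuples amounts to averaging over the permutations of any one of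
them. -/
theorem permAverage_comp_of_injective {A : Type*} [AddCommGroup A] [Module ℝ A] {n d : ℕ}
    (F : (Fin d → Fin n) → A) {j : Fin d → Fin n} (hj : Function.Injective j) :
    permAverage n (fun σ => F (σ ∘ j)) =
      ((Nat.factorial (n - d) : ℝ) / (Nat.factorial n : ℝ)) •
        ∑ i ∈ Finset.univ.filter (fun i : Fin d → Fin n => Function.Injective i), F i := by
  have hdn : d ≤ n := by simpa using Fintype.card_le_of_injective j hj
  set S := Finset.univ.filter (fun i : Fin d → Fin n => Function.Injective i) with hS
  have hcard : S.card = n.descFactorial d := by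
    rw [hS, ← Fintype.card_subtype,
      Fintype.card_congr (Equiv.subtypeInjectiveEquivEmbedding (Fin d) (Fin n)),
      Fintype.card_embedding_eq, Fintype.card_fin, Fintype.card_fin]
  have hinv (σ : Equiv.Perm (Fin n)) : ∑ i ∈ S, F (σ ∘ i) = ∑ i ∈ S, F i := by
    refine Finset.sum_equiv (Equiv.arrowCongr (Equiv.refl _) σ) (fun i => ?_) (fun i _ => rfl)
    simp only [hS, Finset.mem_filter, Finset.mem_univ, true_and]
    exact (σ.injective.of_comp_iff i).symm
  have htrans (i) (hi : i ∈ S) : ∑ σ : Equiv.Perm (Fin n), F (σ ∘ i) =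
      ∑ σ : Equiv.Perm (Fin n), F (σ ∘ j) := by
    obtain ⟨τ, hτ⟩ := exists_perm_comp_eq hj (Finset.mem_filter.1 hi).2
    refine Fintype.sum_equiv (Equiv.mulRight τ) _ _ (fun σ => congrArg F ?_)
    ext1 k
    simp [hτ]
  have hdouble : n.factorial • ∑ i ∈ S, F i =
      n.descFactorial d • ∑ σ : Equiv.Perm (Fin n), F (σ ∘ j) := by
    rw [← hcard, ← Finset.sum_const, ← Finset.sum_congr rfl htrans, Finset.sum_comm,
      Finset.sum_congr rfl (fun σ _ => hinv σ), Finset.sum_const, Finset.card_univ,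
      Fintype.card_perm, Fintype.card_fin]
  have hn : (n.factorial : ℝ) ≠ 0 := by positivity
  have hfac : (Nat.factorial (n - d) : ℝ) * n.descFactorial d = n.factorial := by
    exact_mod_cast Nat.factorial_mul_descFactorial hdn
  rw [← Nat.cast_smul_eq_nsmul ℝ, ← Nat.cast_smul_eq_nsmul ℝ] at hdouble
  rw [permAverage, ← inv_smul_smul₀ hn (∑ i ∈ S, F i), hdouble, smul_smul, smul_smul]
  congr 1
  rw [← hfac] at hn ⊢
  field_simp

theorem permAverage_prod_of_nodup {A : Type*} [Ring A] [Module ℝ A] {n : ℕ}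
    (x : Fin n → A) {l : List (Fin n)} (hl : l.Nodup) :
    permAverage n (fun σ => (l.map (fun i => x (σ i))).prod) = avgProd n l.length x := by
  rw [avgProd, ← permAverage_comp_of_injective
    (fun i => ((List.finRange l.length).map (fun k => x (i k))).prod) hl.injective_get]
  congr! 3 with σ
  conv_lhs => rw [← List.map_get_finRange l, List.map_map]
  rfl

theorem avgProd_zero {A : Type*} [Ring A] [Module ℝ A] (n : ℕ) (x : Fin n → A) :
    avgProd n 0 x = 1 := by
  have hn : (n.factorial : ℝ) ≠ 0 := by positivity
  simp [avgProd, Function.injective_of_subsingleton, hn]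

/-- Pascal's rule for binomial sums. -/
theorem sum_choose_succ_smul {A : Type*} [AddCommGroup A] [Module ℝ A] (p : ℕ → A) (m : ℕ) :
    ∑ k ∈ Finset.range (m + 2), ((m + 1).choose k : ℝ) • p k =
      ∑ k ∈ Finset.range (m + 1), (m.choose k : ℝ) • p k +
        ∑ k ∈ Finset.range (m + 1), (m.choose k : ℝ) • p (k + 1) := by
  have hlast : ∑ k ∈ Finset.range (m + 1), (m.choose k : ℝ) • p k =
      ∑ k ∈ Finset.range (m + 2), (m.choose k : ℝ) • p k := by
    rw [Finset.sum_range_succ _ (m + 1)]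
    simp
  rw [hlast, Finset.sum_range_succ', Finset.sum_range_succ' _ (m + 1)]
  simp only [Nat.choose_succ_succ, Nat.cast_add, add_smul, Finset.sum_add_distrib,
    Nat.choose_zero_right]
  abel

theorem permAverage_prod_mul_prod_one_add {A : Type*} [Ring A] [Module ℝ A] {n : ℕ}
    (a : Fin n → A) (l₂ l₁ : List (Fin n)) (hl : (l₁ ++ l₂).Nodup) :
    permAverage n (fun σ =>
        (l₁.map (fun i => a (σ i))).prod * (l₂.map (fun i => 1 + a (σ i))).prod) =
      ∑ k ∈ Finset.range (l₂.length + 1),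
        (l₂.length.choose k : ℝ) • avgProd n (l₁.length + k) a := by
  induction l₂ generalizing l₁ with
  | nil => simpa using permAverage_prod_of_nodup a (by simpa using hl)
  | cons y t ih =>
    have hskip := ih l₁ (hl.sublist (by simp))
    have htake := ih (l₁ ++ [y]) (by simpa using hl)
    rw [List.length_cons, sum_choose_succ_smul (fun k => avgProd n (l₁.length + k) a), ← hskip]
    simp only [List.length_append, List.length_singleton, add_assoc, add_comm 1] at htake
    rw [← htake, ← permAverage_add]
    congr 1
    ext1 σ
    simp [mul_add, add_mul, mul_assoc]

/-- For positive bounded operators `x_1, …, x_n` on a complex Hilbert space with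
`∑ x_i = n • 1`, setting `a_i := x_i - 1`, one has
`P_d(x_1,…,x_n) = 1 + ∑_{k=1}^{d} (d choose k) P_k(a_1,…,a_n)`. -/
theorem avgProd_eq_one_add_sum {H : Type*} [NormedAddCommGroup H]
    [InnerProductSpace ℂ H] [CompleteSpace H] (n d : ℕ) (hd : 1 ≤ d) (hdn : d ≤ n)
    (x : Fin n → H →L[ℂ] H) (hx : ∀ j, (x j).IsPositive)
    (hsum : ∑ i, x i = n • (1 : H →L[ℂ] H))
    (a : Fin n → H →L[ℂ] H) (ha : ∀ i, a i = x i - 1) :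
    avgProd n d x =
      1 + ∑ k ∈ Finset.Icc 1 d, (d.choose k : ℝ) • avgProd n k a := by
  have hlist : ((List.finRange n).take d).Nodup := (List.nodup_finRange n).take
  have hlen : ((List.finRange n).take d).length = d := by simp [hdn]
  have hxa : x = fun i => 1 + a i := by
    ext1 i
    simp [ha]
  have hexp := permAverage_prod_mul_prod_one_add a ((List.finRange n).take d) []
    (by simpa using hlist)
  have hxavg := permAverage_prod_of_nodup x hlist
  simp only [List.map_nil, List.prod_nil, one_mul, List.length_nil, zero_add, hlen] at hexp
  rw [hlen, hxa] at hxavg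
  rw [hxa, ← hxavg, hexp, Finset.range_eq_Ico, Finset.sum_eq_sum_Ico_succ_bot d.succ_pos]
  simp only [Nat.choose_zero_right, Nat.cast_one, one_smul, avgProd_zero]
  rfl
end

section
/- Let H be a complex Hilbert space, let d ≥ 2, and let a_1,…,a_n be self-adjoint bounded operators on H with ∑_{i=1}^n a_i = 0. Let S ≥ ‖∑_{i=1}^n a_i²‖^{1/2}. For a partition ν of {1,…,d}, define [ν] := ∑_{j : ker(j) ≥ ν} a_{j_1} a_{j_2} ⋯ a_{j_d} and the transposed sum [ν̄] := ∑_{j : ker(j) ≥ ν} a_{j_d} a_{j_{d−1}} ⋯ a_{j_1}, summing over j ∈ {1,…,n}^d constant on each block of ν. Then, in the order of self-adjoint operators, −2·S^{d−2}·∑_{i=1}^n a_i² ≤ [ν] + [ν̄] ≤ 2·S^{d−2}·∑_{i=1}^n a_i². -/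
open scoped InnerProductSpace

section PartialAssignments

variable {β ι : Type*} [Fintype β] [DecidableEq β] [Fintype ι]

/-- The assignments `β → ι` that take the default value `i₀` outside `R`. -/
def assignments (i₀ : ι) (R : Finset β) : Finset (β → ι) :=
  Fintype.piFinset fun b => if b ∈ R then Finset.univ else {i₀}

theorem mem_assignments {i₀ : ι} {R : Finset β} {c : β → ι} :
    c ∈ assignments i₀ R ↔ ∀ b, b ∉ R → c b = i₀ := by
  simp only [assignments, Fintype.mem_piFinset]
  refine forall_congr' fun b => ?_
  by_cases hb : b ∈ R <;> simp [hb]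

theorem assignments_univ (i₀ : ι) :
    assignments i₀ (Finset.univ : Finset β) = Finset.univ := by
  ext c
  simp [mem_assignments]

theorem sum_assignments_empty {M : Type*} [AddCommMonoid M] (i₀ : ι) (f : (β → ι) → M) :
    ∑ c ∈ assignments i₀ (∅ : Finset β), f c = f fun _ => i₀ := by
  have h : assignments i₀ (∅ : Finset β) = {fun _ => i₀} := by
    ext c
    simp [mem_assignments, funext_iff]
  rw [h, Finset.sum_singleton]

theorem sum_assignments_insert {M : Type*} [AddCommMonoid M] {i₀ : ι} {R : Finset β} {b : β}
    (hb : b ∉ R) (f : (β → ι) → M) :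
    ∑ c ∈ assignments i₀ (insert b R), f c =
      ∑ c ∈ assignments i₀ R, ∑ i, f (Function.update c b i) := by
  rw [← Finset.sum_product']
  refine Finset.sum_bij' (fun c _ => (Function.update c b i₀, c b))
    (fun p _ => Function.update p.1 b p.2) ?_ ?_ ?_ ?_ ?_
  · intro c hc
    simp only [Finset.mem_product, Finset.mem_univ, and_true, mem_assignments] at hc ⊢
    intro b' hb'
    by_cases h : b' = b
    · simp [h]
    · simp [h, hc b' (by simp [h, hb'])]
  · intro p hp
    simp only [Finset.mem_product, Finset.mem_univ, and_true, mem_assignments] at hp ⊢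
    intro b' hb'
    simp only [Finset.mem_insert, not_or] at hb'
    simp [hb'.1, hp b' hb'.2]
  · intro c _
    simp
  · intro p hp
    simp only [Finset.mem_product, Finset.mem_univ, and_true, mem_assignments] at hp
    ext1
    · simp [← hp b hb]
    · simp
  · intro c _
    simp

theorem sum_assignments_singleton {M : Type*} [AddCommMonoid M] (i₀ : ι) (b : β) (f : ι → M) :
    ∑ c ∈ assignments i₀ ({b} : Finset β), f (c b) = ∑ i, f i := by
  rw [← insert_empty_eq, sum_assignments_insert (Finset.notMem_empty b), sum_assignments_empty]
  simp

end PartialAssignments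

section WordProducts

variable {β ι : Type*} [DecidableEq β]

theorem map_prod_update {M : Type*} [Monoid M] (a : ι → M) (c : β → ι) {u : List β} {b : β}
    (hb : b ∉ u) (i : ι) :
    (u.map fun k => a (Function.update c b i k)).prod = (u.map fun k => a (c k)).prod := by
  congr 1
  refine List.map_congr_left fun k hk => ?_
  rw [Function.update_of_ne]
  rintro rfl
  exact hb hk

variable [Fintype β] [Fintype ι]
variable {H : Type*} [NormedAddCommGroup H] [InnerProductSpace ℂ H]

/-- Cauchy–Schwarz for the pairing of two families of vectors. -/
theorem norm_sum_inner_sq_le {κ : Type*} (s : Finset κ) (f g : κ → H) :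
    ‖∑ k ∈ s, ⟪f k, g k⟫_ℂ‖ ^ 2 ≤ (∑ k ∈ s, ‖f k‖ ^ 2) * ∑ k ∈ s, ‖g k‖ ^ 2 := by
  calc ‖∑ k ∈ s, ⟪f k, g k⟫_ℂ‖ ^ 2 ≤ (∑ k ∈ s, ‖f k‖ * ‖g k‖) ^ 2 := by
        gcongr
        exact norm_sum_le_of_le _ fun k _ => norm_inner_le_norm _ _
    _ ≤ _ := Finset.sum_mul_sq_le_sq_mul_sq _ _ _

/-- The key estimate: contracting a word in the `a i` against a family `v` on the left and a family
`G`, depending only on the labels in `O`, on the right costs one factor `S` per letter. -/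
theorem norm_sum_inner_word_sq_le (a : ι → H →L[ℂ] H) (i₀ : ι) {S : ℝ}
    (hsum : ∑ i, a i = 0)
    (hrow : ∀ y, ∑ i, ‖a i y‖ ^ 2 ≤ S ^ 2 * ‖y‖ ^ 2)
    (hcol : ∀ y : ι → H, ‖∑ i, a i (y i)‖ ^ 2 ≤ S ^ 2 * ∑ i, ‖y i‖ ^ 2)
    (v : ι → H) (hv : ∑ i, v i = 0) (b₀ : β) (u : List β) :
    ∀ (O : Finset β) (G : (β → ι) → H), (∀ c c', (∀ b ∈ O, c b = c' b) → G c = G c') →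
      O ⊆ insert b₀ u.toFinset →
      ‖∑ c ∈ assignments i₀ (insert b₀ u.toFinset),
          ⟪v (c b₀), (u.map fun k => a (c k)).prod (G c)⟫_ℂ‖ ^ 2 ≤
        (S ^ 2) ^ u.length * (∑ i, ‖v i‖ ^ 2) * ∑ c ∈ assignments i₀ O, ‖G c‖ ^ 2 := by
  induction u using List.reverseRecOn with
  | nil =>
    intro O G hG hO
    simp only [List.toFinset_nil, insert_empty_eq, Finset.subset_singleton_iff] at hO
    simp only [List.toFinset_nil, insert_empty_eq, List.map_nil, List.prod_nil,
      one_apply_eq_self, List.length_nil, pow_zero, one_mul]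
    rcases hO with rfl | rfl
    · have hconst : ∀ c, G c = G fun _ => i₀ := fun c => hG _ _ (by simp)
      simp_rw [hconst]
      rw [← sum_inner, sum_assignments_singleton i₀ b₀ v, hv, inner_zero_left]
      simp only [norm_zero, ne_eq, OfNat.ofNat_ne_zero, not_false_eq_true, zero_pow]
      positivity
    · have h := norm_sum_inner_sq_le (assignments i₀ {b₀}) (fun c => v (c b₀)) G
      rwa [sum_assignments_singleton i₀ b₀ fun i => ‖v i‖ ^ 2] at h
  | append_singleton u b ih =>
    intro O G hG hO
    have hR : insert b₀ (u ++ [b]).toFinset = insert b (insert b₀ u.toFinset) := by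
      ext k
      simp only [List.toFinset_append, List.toFinset_cons, List.toFinset_nil, insert_empty_eq,
        Finset.mem_insert, Finset.mem_union, Finset.mem_singleton]
      tauto
    rw [hR] at hO ⊢
    have hstep : ∀ (O' : Finset β) (G' : (β → ι) → H),
        (∑ c ∈ assignments i₀ O', ‖G' c‖ ^ 2 ≤ S ^ 2 * ∑ c ∈ assignments i₀ O, ‖G c‖ ^ 2) →
        (S ^ 2) ^ u.length * (∑ i, ‖v i‖ ^ 2) * ∑ c ∈ assignments i₀ O', ‖G' c‖ ^ 2 ≤
        (S ^ 2) ^ (u ++ [b]).length * (∑ i, ‖v i‖ ^ 2) * ∑ c ∈ assignments i₀ O, ‖G c‖ ^ 2 := by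
      intro O' G' h
      calc _ ≤ (S ^ 2) ^ u.length * (∑ i, ‖v i‖ ^ 2) *
            (S ^ 2 * ∑ c ∈ assignments i₀ O, ‖G c‖ ^ 2) := by gcongr
        _ = _ := by
          rw [List.length_append, List.length_singleton, pow_succ]
          ring
    simp only [List.map_append, List.map_cons, List.map_nil, List.prod_append, List.prod_singleton,
      mul_apply_eq_comp]
    by_cases hb : b ∈ insert b₀ u.toFinset
    · rw [Finset.insert_eq_of_mem hb] at hO ⊢
      refine (ih (insert b O) (fun c => a (c b) (G c)) ?_ ?_).trans (hstep _ _ ?_)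
      · intro c c' h
        rw [h b (Finset.mem_insert_self _ _),
          hG c c' fun k hk => h k (Finset.mem_insert_of_mem hk)]
      · exact Finset.insert_subset hb hO
      · rw [Finset.mul_sum]
        by_cases hbO : b ∈ O
        · rw [Finset.insert_eq_of_mem hbO]
          refine Finset.sum_le_sum fun c _ => le_trans ?_ (hrow (G c))
          exact Finset.single_le_sum (f := fun i => ‖a i (G c)‖ ^ 2)
            (fun i _ => by positivity) (Finset.mem_univ (c b))
        · rw [sum_assignments_insert hbO]
          refine Finset.sum_le_sum fun c _ => ?_
          have hGc : ∀ i, G (Function.update c b i) = G c := fun i => hG _ _ fun k hk => by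
            rw [Function.update_of_ne]
            rintro rfl
            exact hbO hk
          simpa [hGc] using hrow (G c)
    · have hb₀ : b₀ ≠ b := by
        rintro rfl
        simp at hb
      have hbu : b ∉ u := by
        intro h
        simp [h] at hb
      rw [sum_assignments_insert hb]
      simp only [Function.update_of_ne hb₀, map_prod_update a _ hbu, Function.update_self,
        ← inner_sum, ← map_sum]
      refine (ih (O.erase b) (fun c => ∑ i, a i (G (Function.update c b i))) ?_ ?_).trans
        (hstep _ _ ?_)
      · intro c c' h
        refine Finset.sum_congr rfl fun i _ => ?_
        rw [hG (Function.update c b i) (Function.update c' b i)]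
        intro k hk
        by_cases hkb : k = b
        · simp [hkb]
        · simp [hkb, h k (Finset.mem_erase.2 ⟨hkb, hk⟩)]
      · rwa [← Finset.subset_insert_iff]
      · by_cases hbO : b ∈ O
        · conv_rhs => rw [← Finset.insert_erase hbO]
          rw [sum_assignments_insert (Finset.notMem_erase b O), Finset.mul_sum]
          exact Finset.sum_le_sum fun c _ => hcol _
        · have hzero : ∀ c, ∑ i, a i (G (Function.update c b i)) = 0 := by
            intro c
            have hGc : ∀ i, G (Function.update c b i) = G c := fun i => hG _ _ fun k hk => by
              rw [Function.update_of_ne]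
              rintro rfl
              exact hbO hk
            simp_rw [hGc]
            rw [← sum_apply, hsum, zero_apply]
          simp only [hzero, norm_zero, ne_eq, OfNat.ofNat_ne_zero, not_false_eq_true, zero_pow,
            Finset.sum_const_zero]
          positivity

/-- The quadratic form of a sum of words of length at least two over all assignments of
its labels. -/
theorem norm_inner_sum_word_le (a : ι → H →L[ℂ] H) (i₀ : ι) {S : ℝ} (hS : 0 ≤ S)
    (hsymm : ∀ i x y, ⟪a i x, y⟫_ℂ = ⟪x, a i y⟫_ℂ)
    (hsum : ∑ i, a i = 0)
    (hrow : ∀ y, ∑ i, ‖a i y‖ ^ 2 ≤ S ^ 2 * ‖y‖ ^ 2)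
    (hcol : ∀ y : ι → H, ‖∑ i, a i (y i)‖ ^ 2 ≤ S ^ 2 * ∑ i, ‖y i‖ ^ 2)
    (b₀ b₁ : β) (u : List β) (hw : (b₀ :: (u ++ [b₁])).toFinset = Finset.univ) (x : H) :
    ‖⟪x, (∑ c : β → ι, ((b₀ :: (u ++ [b₁])).map fun k => a (c k)).prod) x⟫_ℂ‖ ≤
      S ^ u.length * ∑ i, ‖a i x‖ ^ 2 := by
  have hR : insert b₁ (insert b₀ u.toFinset) = Finset.univ := by
    rw [← hw]
    ext k
    simp only [Finset.mem_insert, List.mem_toFinset, List.mem_cons, List.mem_append,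
      List.not_mem_nil, or_false]
    tauto
  have hsumx : ∑ i, a i x = 0 := by
    rw [← sum_apply, hsum, zero_apply]
  have hexp : ⟪x, (∑ c : β → ι, ((b₀ :: (u ++ [b₁])).map fun k => a (c k)).prod) x⟫_ℂ =
      ∑ c ∈ assignments i₀ (insert b₁ (insert b₀ u.toFinset)),
        ⟪a (c b₀) x, (u.map fun k => a (c k)).prod (a (c b₁) x)⟫_ℂ := by
    rw [hR, assignments_univ, sum_apply, inner_sum]
    refine Finset.sum_congr rfl fun c _ => ?_
    simp [hsymm]
  rw [hexp]
  by_cases hb : b₁ ∈ insert b₀ u.toFinset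
  · rw [Finset.insert_eq_of_mem hb]
    have h := norm_sum_inner_word_sq_le a i₀ hsum hrow hcol (fun i => a i x) hsumx b₀ u {b₁}
      (fun c => a (c b₁) x) (fun c c' h => by rw [h b₁ (by simp)])
      (Finset.singleton_subset_iff.2 hb)
    rw [sum_assignments_singleton i₀ b₁ fun i => ‖a i x‖ ^ 2] at h
    refine le_of_sq_le_sq ?_ (by positivity)
    refine h.trans_eq ?_
    ring
  · have hb₀ : b₀ ≠ b₁ := by
      rintro rfl
      simp at hb
    have hbu : b₁ ∉ u := by
      intro h
      simp [h] at hb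
    rw [sum_assignments_insert hb]
    simp only [Function.update_of_ne hb₀, map_prod_update a _ hbu, Function.update_self,
      ← inner_sum, ← map_sum, hsumx, map_zero, inner_zero_right, Finset.sum_const_zero, norm_zero]
    positivity

end WordProducts

section RowColumn

variable {ι : Type*} [Fintype ι]
variable {H : Type*} [NormedAddCommGroup H] [InnerProductSpace ℂ H]

theorem inner_sum_sq_apply {a : ι → H →L[ℂ] H} (hsymm : ∀ i x y, ⟪a i x, y⟫_ℂ = ⟪x, a i y⟫_ℂ)
    (x : H) : ⟪x, (∑ i, a i ^ 2) x⟫_ℂ = ((∑ i, ‖a i x‖ ^ 2 : ℝ) : ℂ) := by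
  rw [sum_apply, inner_sum, Complex.ofReal_sum]
  refine Finset.sum_congr rfl fun i _ => ?_
  rw [pow_two, mul_apply_eq_comp, ← hsymm, inner_self_eq_norm_sq_to_K]
  simp

theorem sum_norm_sq_apply_le_s10 {a : ι → H →L[ℂ] H}
    (hsymm : ∀ i x y, ⟪a i x, y⟫_ℂ = ⟪x, a i y⟫_ℂ) {S : ℝ}
    (hS : Real.sqrt ‖∑ i, a i ^ 2‖ ≤ S) (y : H) :
    ∑ i, ‖a i y‖ ^ 2 ≤ S ^ 2 * ‖y‖ ^ 2 := by
  have hnorm : ‖∑ i, a i ^ 2‖ ≤ S ^ 2 := (Real.sqrt_le_iff.1 hS).2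
  calc ∑ i, ‖a i y‖ ^ 2 = ‖⟪y, (∑ i, a i ^ 2) y⟫_ℂ‖ := by
        rw [inner_sum_sq_apply hsymm, Complex.norm_real, Real.norm_of_nonneg (by positivity)]
    _ ≤ ‖y‖ * (‖∑ i, a i ^ 2‖ * ‖y‖) := (norm_inner_le_norm _ _).trans
        (by gcongr; exact ContinuousLinearMap.le_opNorm _ _)
    _ ≤ ‖y‖ * (S ^ 2 * ‖y‖) := by gcongr
    _ = S ^ 2 * ‖y‖ ^ 2 := by ring

theorem norm_sum_apply_sq_le {a : ι → H →L[ℂ] H}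
    (hsymm : ∀ i x y, ⟪a i x, y⟫_ℂ = ⟪x, a i y⟫_ℂ) {S : ℝ}
    (hrow : ∀ y, ∑ i, ‖a i y‖ ^ 2 ≤ S ^ 2 * ‖y‖ ^ 2) (y : ι → H) :
    ‖∑ i, a i (y i)‖ ^ 2 ≤ S ^ 2 * ∑ i, ‖y i‖ ^ 2 := by
  set z := ∑ i, a i (y i) with hz
  have hinner : ⟪z, z⟫_ℂ = ∑ i, ⟪a i z, y i⟫_ℂ := by
    conv_lhs => rw [hz, inner_sum]
    simp_rw [hsymm]
    rfl
  have hcs := norm_sum_inner_sq_le Finset.univ (fun i => a i z) y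
  rw [← hinner, inner_self_eq_norm_sq_to_K] at hcs
  have hle : (‖z‖ ^ 2) ^ 2 ≤ ‖z‖ ^ 2 * (S ^ 2 * ∑ i, ‖y i‖ ^ 2) := by
    calc (‖z‖ ^ 2) ^ 2 ≤ (∑ i, ‖a i z‖ ^ 2) * ∑ i, ‖y i‖ ^ 2 := by simpa using hcs
      _ ≤ (S ^ 2 * ‖z‖ ^ 2) * ∑ i, ‖y i‖ ^ 2 := by gcongr; exact hrow z
      _ = _ := by ring
  rcases (sq_nonneg ‖z‖).eq_or_lt with h | h
  · rw [← h]
    positivity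
  · rw [pow_two] at hle
    exact le_of_mul_le_mul_left hle h

end RowColumn

/-- Tuples whose kernel is coarser than `ν` are the functions on the blocks of `ν`. -/
theorem finsum_mem_le_ker {α ι M : Type*} [AddCommMonoid M] (ν : Setoid α)
    [Fintype (Quotient ν → ι)] (f : (α → ι) → M) :
    ∑ᶠ j ∈ {j : α → ι | ν ≤ Setoid.ker j}, f j =
      ∑ c : Quotient ν → ι, f fun k => c (Quotient.mk ν k) := by
  rw [← finsum_eq_sum_of_fintype,
    ← finsum_mem_univ fun c : Quotient ν → ι => f fun k => c (Quotient.mk ν k)]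
  symm
  refine finsum_mem_eq_of_bijOn
    (f := fun c : Quotient ν → ι => f fun k => c (Quotient.mk ν k)) (g := f)
    (fun (c : Quotient ν → ι) k => c (Quotient.mk ν k)) ⟨?_, ?_, ?_⟩ fun c _ => rfl
  · intro c _ k l hkl
    exact congrArg c (Quotient.sound hkl)
  · intro c _ c' _ h
    funext q
    induction q using Quotient.inductionOn with
    | h k => exact congrFun h k
  · intro j hj
    exact ⟨fun q => Quotient.lift j (fun k l hkl => hj hkl) q, Set.mem_univ _, rfl⟩

theorem star_list_map_prod {α M : Type*} [Monoid M] [StarMul M] {f : α → M}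
    (hf : ∀ k, IsSelfAdjoint (f k)) (l : List α) :
    star (l.map f).prod = (l.reverse.map f).prod := by
  induction l with
  | nil => simp
  | cons k l ih => simp [ih, (hf k).star_eq]

/-- The quadratic form of a partition sum is dominated by that of `∑ i, a i ^ 2`. -/
theorem norm_inner_partitionSum_le {ι : Type*} [Fintype ι] {H : Type*} [NormedAddCommGroup H]
    [InnerProductSpace ℂ H] {a : ι → H →L[ℂ] H}
    (hsymm : ∀ i x y, ⟪a i x, y⟫_ℂ = ⟪x, a i y⟫_ℂ) (hsum : ∑ i, a i = 0) {S : ℝ}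
    (hS : Real.sqrt ‖∑ i, a i ^ 2‖ ≤ S) (m : ℕ) (ν : Setoid (Fin (m + 2))) (x : H) :
    ‖⟪x, (∑ᶠ j ∈ {j : Fin (m + 2) → ι | ν ≤ Setoid.ker j},
        ((List.finRange (m + 2)).map fun k => a (j k)).prod) x⟫_ℂ‖ ≤
      S ^ m * ∑ i, ‖a i x‖ ^ 2 := by
  classical
  have hS0 : 0 ≤ S := (Real.sqrt_nonneg _).trans hS
  have hrow := sum_norm_sq_apply_le_s10 hsymm hS
  have hcol := norm_sum_apply_sq_le hsymm hrow
  rw [finsum_mem_le_ker ν fun j => ((List.finRange (m + 2)).map fun k => a (j k)).prod]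
  rcases isEmpty_or_nonempty ι with hn | ⟨⟨i₀⟩⟩
  · have : Nonempty (Quotient ν) := ⟨Quotient.mk ν 0⟩
    simp
  · have hw : (List.finRange (m + 2)).map (Quotient.mk ν) = Quotient.mk ν 0 ::
        ((List.finRange m).map (fun k => Quotient.mk ν k.castSucc.succ) ++
          [Quotient.mk ν (Fin.last m).succ]) := by
      rw [List.finRange_succ, List.finRange_succ_last]
      simp only [List.map_cons, List.map_append, List.map_map, List.map_nil]
      rfl
    have h := norm_inner_sum_word_le a i₀ hS0 hsymm hsum hrow hcol _ _ _
      (by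
        rw [← hw]
        ext q
        induction q using Quotient.inductionOn with
        | h k => simp) x
    rw [← hw, List.length_map, List.length_finRange] at h
    simpa only [List.map_map, Function.comp_def] using h

theorem isPositive_add_and_sub_of_abs_re_inner_le {H : Type*} [NormedAddCommGroup H]
    [InnerProductSpace ℂ H] [CompleteSpace H] {A B : H →L[ℂ] H} (hA : IsSelfAdjoint A)
    (hB : IsSelfAdjoint B) (h : ∀ x, |RCLike.re ⟪x, A x⟫_ℂ| ≤ RCLike.re ⟪x, B x⟫_ℂ) :
    (A + B).IsPositive ∧ (B - A).IsPositive := by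
  rw [ContinuousLinearMap.isPositive_def', ContinuousLinearMap.isPositive_def']
  refine ⟨⟨hA.add hB, fun x => ?_⟩, ⟨hB.sub hA, fun x => ?_⟩⟩
  · rw [ContinuousLinearMap.reApplyInnerSelf_apply, inner_re_symm, add_apply, inner_add_right,
      map_add]
    linarith [neg_le_of_abs_le (h x)]
  · rw [ContinuousLinearMap.reApplyInnerSelf_apply, inner_re_symm, sub_apply, inner_sub_right,
      map_sub]
    linarith [le_of_abs_le (h x)]

/-- For self-adjoint bounded operators `a_1, …, a_n` on a complex Hilbert space with
`∑ a_i = 0`, `d ≥ 2`, `S ≥ ‖∑ a_i²‖^(1/2)`, and any partition `ν` of `{1,…,d}`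
(modeled as `Setoid (Fin d)`), the full partition sum
`[ν] = ∑_{j : ker j ≥ ν} a_{j 1} ⋯ a_{j d}` and its transpose
`[ν̄] = ∑_{j : ker j ≥ ν} a_{j d} ⋯ a_{j 1}` satisfy, in the order of
self-adjoint operators,
`-2 S^(d-2) ∑ a_i² ≤ [ν] + [ν̄] ≤ 2 S^(d-2) ∑ a_i²`
(where `a ≤ b` means that `b - a` is a positive operator). -/
theorem fullPartitionSum_add_transpose_le {H : Type*} [NormedAddCommGroup H]
    [InnerProductSpace ℂ H] [CompleteSpace H] (n d : ℕ) (hd : 2 ≤ d)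
    (a : Fin n → H →L[ℂ] H) (ha : ∀ i, IsSelfAdjoint (a i))
    (hsum : ∑ i, a i = 0) (S : ℝ) (hS : Real.sqrt ‖∑ i, (a i) ^ 2‖ ≤ S)
    (ν : Setoid (Fin d))
    (T T' : H →L[ℂ] H)
    (hT : T = ∑ᶠ j ∈ {j : Fin d → Fin n | ν ≤ Setoid.ker j},
        ((List.finRange d).map (fun k => a (j k))).prod)
    (hT' : T' = ∑ᶠ j ∈ {j : Fin d → Fin n | ν ≤ Setoid.ker j},
        ((List.finRange d).reverse.map (fun k => a (j k))).prod) :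
    ((T + T') - (-(2 * S ^ (d - 2)) • ∑ i, (a i) ^ 2)).IsPositive ∧
      ((2 * S ^ (d - 2)) • (∑ i, (a i) ^ 2) - (T + T')).IsPositive := by
  have hsymm : ∀ i x y, ⟪a i x, y⟫_ℂ = ⟪x, a i y⟫_ℂ := fun i => (ha i).isSymmetric
  have hbound : ∀ x, ‖⟪x, T x⟫_ℂ‖ ≤ S ^ (d - 2) * ∑ i, ‖a i x‖ ^ 2 := by
    obtain ⟨m, rfl⟩ : ∃ m, d = m + 2 := ⟨d - 2, by omega⟩
    rw [hT]
    exact norm_inner_partitionSum_le hsymm hsum hS m ν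
  have hadj : T' = star T := by
    classical
    rw [hT, hT', finsum_mem_le_ker ν fun j => ((List.finRange d).map fun k => a (j k)).prod,
      finsum_mem_le_ker ν fun j => ((List.finRange d).reverse.map fun k => a (j k)).prod, star_sum]
    exact Finset.sum_congr rfl fun c _ => (star_list_map_prod (fun k => ha _) _).symm
  have hTT : IsSelfAdjoint (T + T') := hadj ▸ IsSelfAdjoint.add_star_self T
  have hQ : IsSelfAdjoint (∑ i, a i ^ 2) := isSelfAdjoint_sum _ fun i _ => (ha i).pow 2
  rw [neg_smul, sub_neg_eq_add]
  refine isPositive_add_and_sub_of_abs_re_inner_le hTT (.smul (.all _) hQ) fun x => ?_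
  have hTx : RCLike.re ⟪x, (T + T') x⟫_ℂ = 2 * RCLike.re ⟪x, T x⟫_ℂ := by
    rw [hadj, add_apply, inner_add_right, map_add, ContinuousLinearMap.star_eq_adjoint,
      ContinuousLinearMap.adjoint_inner_right, inner_re_symm (T x)]
    ring
  have hQx : RCLike.re ⟪x, ((2 * S ^ (d - 2)) • ∑ i, a i ^ 2) x⟫_ℂ =
      2 * (S ^ (d - 2) * ∑ i, ‖a i x‖ ^ 2) := by
    rw [smul_apply, inner_smul_right_eq_smul, inner_sum_sq_apply hsymm, RCLike.smul_re, mul_assoc]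
    rfl
  rw [hTx, hQx, abs_mul, abs_two]
  gcongr
  exact (RCLike.abs_re_le_norm _).trans (hbound x)
end

section
/- Let H be a complex Hilbert space, 1 ≤ d ≤ n, and let x_1,…,x_n be self-adjoint bounded operators on H such that (i) ∑_{i=1}^n x_i = n·1 (so P_1(x_1,…,x_n) = 1), and (ii) ‖(∑_{i=1}^n x_i²)^{1/2}‖ ≤ n/(3d). Then the arithmetic-geometric mean inequality holds in the order sense: P_d(x_1,…,x_n) ≤ 1, i.e., 1 − P_d(x_1,…,x_n) is a positive operator. -/
open scoped BigOperators

section MarginalSum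

variable {B ι M : Type*} [Fintype B] [DecidableEq B] [Fintype ι] [DecidableEq ι]
  [AddCommMonoid M]

/-- The sum of `G` over all assignments that agree with `i` off `O`. -/
def marginalSum (O : Finset B) (G : (B → ι) → M) (i : B → ι) : M :=
  ∑ j with ∀ b, b ∉ O → j b = i b, G j

theorem marginalSum_empty (G : (B → ι) → M) (i : B → ι) : marginalSum ∅ G i = G i := by
  have : (Finset.univ.filter fun j : B → ι => ∀ b, b ∉ (∅ : Finset B) → j b = i b) = {i} := by
    ext j; simp [funext_iff]
  rw [marginalSum, this, Finset.sum_singleton]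

theorem marginalSum_univ (G : (B → ι) → M) (i : B → ι) :
    marginalSum Finset.univ G i = ∑ j, G j := by
  simp [marginalSum]

theorem marginalSum_insert {O : Finset B} {b : B} (hb : b ∉ O) (G : (B → ι) → M) (i : B → ι) :
    marginalSum (insert b O) G i = ∑ a, marginalSum O G (Function.update i b a) := by
  unfold marginalSum
  rw [← Finset.sum_fiberwise _ (fun j : B → ι => j b)]
  refine Finset.sum_congr rfl fun a _ => Finset.sum_congr ?_ fun _ _ => rfl
  ext j
  simp only [Finset.mem_filter, Finset.mem_univ, true_and, Finset.mem_insert, not_or]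
  constructor
  · rintro ⟨h, rfl⟩ c hc
    by_cases hcb : c = b
    · subst hcb; simp
    · rw [Function.update_of_ne hcb, h c ⟨hcb, hc⟩]
  · intro h
    refine ⟨fun c hc => ?_, by simpa using h b hb⟩
    simpa [Function.update_of_ne hc.1] using h c hc.2

theorem marginalSum_update {O : Finset B} {b : B} (hb : b ∉ O) (G : (B → ι) → M)
    (i : B → ι) (a : ι) :
    marginalSum O G (Function.update i b a) =
      marginalSum O (fun j => G (Function.update j b a)) i := by
  unfold marginalSum
  refine Finset.sum_nbij' (fun j => Function.update j b (i b))
    (fun j => Function.update j b a) ?_ ?_ ?_ ?_ ?_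
  · intro j hj
    simp only [Finset.mem_filter, Finset.mem_univ, true_and] at hj ⊢
    intro c hc
    by_cases hcb : c = b
    · subst hcb; simp
    · simpa [Function.update_of_ne hcb] using hj c hc
  · intro j hj
    simp only [Finset.mem_filter, Finset.mem_univ, true_and] at hj ⊢
    intro c hc
    by_cases hcb : c = b
    · subst hcb; simp
    · simpa [Function.update_of_ne hcb] using hj c hc
  · intro j hj
    simp only [Finset.mem_filter, Finset.mem_univ, true_and] at hj
    have := hj b hb
    simp only [Function.update_self] at this
    simp [← this]
  · intro j hj
    simp only [Finset.mem_filter, Finset.mem_univ, true_and] at hj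
    simp [← hj b hb]
  · intro j hj
    simp only [Finset.mem_filter, Finset.mem_univ, true_and] at hj
    have := hj b hb
    simp only [Function.update_self] at this
    simp [← this]

theorem marginalSum_insert' {O : Finset B} {b : B} (hb : b ∉ O) (G : (B → ι) → M)
    (i : B → ι) :
    marginalSum (insert b O) G i =
      marginalSum O (fun j => ∑ a, G (Function.update j b a)) i := by
  rw [marginalSum_insert hb]
  simp_rw [marginalSum_update hb]
  unfold marginalSum
  exact Finset.sum_comm

theorem marginalSum_mono {O : Finset B} {G G' : (B → ι) → ℝ} (h : ∀ j, G j ≤ G' j)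
    (i : B → ι) : marginalSum O G i ≤ marginalSum O G' i :=
  Finset.sum_le_sum fun j _ => h j

theorem marginalSum_const_mul (O : Finset B) (c : ℝ) (G : (B → ι) → ℝ) (i : B → ι) :
    marginalSum O (fun j => c * G j) i = c * marginalSum O G i :=
  (Finset.mul_sum _ _ _).symm

end MarginalSum

section Words

variable {B ι A : Type*} [Monoid A]

/-- The product of the letters `y (j b)` along the word `w`. -/
def wordProd (y : ι → A) (j : B → ι) (w : List B) : A :=
  (w.map fun b => y (j b)).prod

theorem wordProd_cons (y : ι → A) (j : B → ι) (b : B) (w : List B) :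
    wordProd y j (b :: w) = y (j b) * wordProd y j w := by
  simp [wordProd]

theorem wordProd_append (y : ι → A) (j : B → ι) (v w : List B) :
    wordProd y j (v ++ w) = wordProd y j v * wordProd y j w := by
  simp [wordProd]

theorem wordProd_update [DecidableEq B] (y : ι → A) (j : B → ι) {b : B} {w : List B}
    (hb : b ∉ w) (a : ι) : wordProd y (Function.update j b a) w = wordProd y j w := by
  unfold wordProd
  congr 1
  refine List.map_congr_left fun c hc => ?_
  rw [Function.update_of_ne (by rintro rfl; exact hb hc)]

end Words

section SquareFunction

variable {ι H : Type*} [Fintype ι] [NormedAddCommGroup H] [InnerProductSpace ℂ H]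
  {y : ι → H →L[ℂ] H} {s : ℝ}

theorem norm_sq_sum_apply_le_s12 (hy : ∀ a (u v : H), inner ℂ (y a u) v = inner ℂ u (y a v))
    (hS : ∀ v, ∑ a, ‖y a v‖ ^ 2 ≤ s ^ 2 * ‖v‖ ^ 2) (v : ι → H) :
    ‖∑ a, y a (v a)‖ ^ 2 ≤ s ^ 2 * ∑ a, ‖v a‖ ^ 2 := by
  set u := ∑ a, y a (v a) with hu
  have h1 : ‖u‖ ^ 2 ≤ ∑ a, ‖v a‖ * ‖y a u‖ := by
    have h : ‖u‖ ^ 2 = ‖inner ℂ u u‖ := by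
      rw [inner_self_eq_norm_sq_to_K]; simp
    rw [h]
    nth_rewrite 1 [hu]
    rw [sum_inner]
    refine (norm_sum_le _ _).trans (Finset.sum_le_sum fun a _ => ?_)
    rw [hy]
    exact norm_inner_le_norm _ _
  have h2 := Finset.sum_mul_sq_le_sq_mul_sq Finset.univ (fun a => ‖v a‖) (fun a => ‖y a u‖)
  have hV : 0 ≤ ∑ a, ‖v a‖ ^ 2 := by positivity
  have h3 : (‖u‖ ^ 2) ^ 2 ≤ (∑ a, ‖v a‖ ^ 2) * (s ^ 2 * ‖u‖ ^ 2) :=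
    (pow_le_pow_left₀ (by positivity) h1 2).trans
      (h2.trans (mul_le_mul_of_nonneg_left (hS u) hV))
  rcases (sq_nonneg ‖u‖).eq_or_lt with h | h
  · rw [← h]; positivity
  · refine le_of_mul_le_mul_right ?_ h
    nlinarith

theorem norm_sq_apply_le (hS : ∀ v, ∑ a, ‖y a v‖ ^ 2 ≤ s ^ 2 * ‖v‖ ^ 2) (a : ι) (v : H) :
    ‖y a v‖ ^ 2 ≤ s ^ 2 * ‖v‖ ^ 2 :=
  (Finset.single_le_sum (f := fun a => ‖y a v‖ ^ 2) (fun _ _ => by positivity)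
    (Finset.mem_univ a)).trans (hS v)

variable {B : Type*} [Fintype B] [DecidableEq B] [DecidableEq ι]

/-- Reading a word from right to left, the letters of `C` are summed over while the remaining
letters are kept as coordinates of an `ℓ²`-direct sum; every letter costs at most `s`. -/
theorem marginalSum_norm_sq_le
    (hy : ∀ a (u v : H), inner ℂ (y a u) v = inner ℂ u (y a v))
    (hS : ∀ v, ∑ a, ‖y a v‖ ^ 2 ≤ s ^ 2 * ‖v‖ ^ 2) (ξ : H) (b : B) (w : List B)
    (C : Finset B) (hC : ∀ c ∈ C, 2 ≤ (w ++ [b]).count c) (i : B → ι) :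
    marginalSum ((w ++ [b]).toFinset \ C)
      (fun i => ‖marginalSum C (fun j => wordProd y j (w ++ [b]) ξ) i‖ ^ 2) i ≤
      (s ^ 2) ^ w.length * ∑ a, ‖y a ξ‖ ^ 2 := by
  induction w generalizing C i with
  | nil =>
    have hC0 : C = ∅ := by
      refine Finset.eq_empty_of_forall_notMem fun c hc => ?_
      have := hC c hc
      have h1 := List.count_le_length (a := c) (l := [b])
      simp only [List.nil_append, List.length_singleton] at this h1
      omega
    subst hC0
    have : ([] ++ [b] : List B).toFinset \ ∅ = insert b ∅ := by simp
    rw [this, marginalSum_insert' (by simp), marginalSum_empty]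
    simp [marginalSum_empty, wordProd]
  | cons c w ih =>
    simp only [List.cons_append, List.length_cons]
    set w' := w ++ [b] with hw'
    by_cases hcC : c ∈ C
    · have hcw : c ∈ w' := by
        have := hC c hcC
        rw [List.cons_append, List.count_cons_self, ← hw'] at this
        exact List.count_pos_iff.1 (by omega)
      have hI := ih (C.erase c) (fun e he => by
        have := hC e (Finset.mem_of_mem_erase he)
        rwa [List.cons_append, List.count_cons_of_ne (Finset.ne_of_mem_erase he).symm] at this) i
      have hO : w'.toFinset \ C.erase c = insert c ((c :: w').toFinset \ C) := by
        ext e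
        simp only [Finset.mem_sdiff, List.mem_toFinset, Finset.mem_erase, Finset.mem_insert,
          List.mem_cons]
        by_cases he : e = c
        · subst he; simp [hcw]
        · simp [he]
      rw [hO, marginalSum_insert' (by simp [hcC])] at hI
      rw [pow_succ', mul_assoc]
      refine le_trans ?_ (mul_le_mul_of_nonneg_left hI (sq_nonneg s))
      rw [← marginalSum_const_mul]
      refine marginalSum_mono (fun j => ?_) i
      have h1 : marginalSum C (fun j => wordProd y j (c :: w') ξ) j =
          ∑ a, y a (marginalSum (C.erase c) (fun j => wordProd y j w' ξ)
            (Function.update j c a)) := by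
        conv_lhs => rw [← Finset.insert_erase hcC]
        rw [marginalSum_insert (by simp)]
        refine Finset.sum_congr rfl fun a _ => ?_
        unfold marginalSum
        rw [map_sum]
        refine Finset.sum_congr rfl fun l hl => ?_
        have := (Finset.mem_filter.1 hl).2 c (by simp)
        simp only [Function.update_self] at this
        change wordProd y l (c :: w') ξ = _
        rw [wordProd_cons, this]; rfl
      rw [h1]
      exact norm_sq_sum_apply_le_s12 hy hS _
    · have hI := ih C (fun e he => by
        have := hC e he
        rwa [List.cons_append, List.count_cons_of_ne (by rintro rfl; exact hcC he)] at this) i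
      have h1 : ∀ j, marginalSum C (fun j => wordProd y j (c :: w') ξ) j =
          y (j c) (marginalSum C (fun j => wordProd y j w' ξ) j) := by
        intro j
        unfold marginalSum
        rw [map_sum]
        refine Finset.sum_congr rfl fun l hl => ?_
        change wordProd y l (c :: w') ξ = _
        rw [wordProd_cons, (Finset.mem_filter.1 hl).2 c hcC]; rfl
      simp_rw [h1]
      rw [pow_succ', mul_assoc]
      refine le_trans ?_ (mul_le_mul_of_nonneg_left hI (sq_nonneg s))
      rw [← marginalSum_const_mul]
      by_cases hcw : c ∈ w'
      · have hO : (c :: w').toFinset \ C = w'.toFinset \ C := by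
          ext e
          simp only [Finset.mem_sdiff, List.mem_toFinset, List.mem_cons]
          by_cases he : e = c
          · subst he; simp [hcw]
          · simp [he]
        rw [hO]
        exact marginalSum_mono (fun j => norm_sq_apply_le hS _ _) i
      · have hO : (c :: w').toFinset \ C = insert c (w'.toFinset \ C) := by
          rw [List.toFinset_cons, Finset.insert_sdiff_of_notMem _ hcC]
        rw [hO, marginalSum_insert' (by simp [hcw])]
        refine marginalSum_mono (fun j => ?_) i
        simp_rw [marginalSum_update hcC, wordProd_update _ _ hcw, Function.update_self]
        exact hS _

/-- A word all of whose letters occur, evaluated on operators summing to zero and summed over all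
assignments, is bounded as a quadratic form by the square function. -/
theorem norm_inner_sum_wordProd_le [Nonempty ι]
    (hy : ∀ a (u v : H), inner ℂ (y a u) v = inner ℂ u (y a v)) (hy0 : ∑ a, y a = 0)
    (hs : 0 ≤ s) (hS : ∀ v, ∑ a, ‖y a v‖ ^ 2 ≤ s ^ 2 * ‖v‖ ^ 2) (ξ : H) (w : List B)
    (m : ℕ) (hm : w.length = m + 2) (hw : ∀ b, b ∈ w) :
    ‖inner ℂ ((∑ j : B → ι, wordProd y j w) ξ) ξ‖ ≤ s ^ m * ∑ a, ‖y a ξ‖ ^ 2 := by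
  obtain ⟨i⟩ : Nonempty (B → ι) := inferInstance
  by_cases h1 : ∃ b, w.count b < 2
  · obtain ⟨b, hb⟩ := h1
    obtain ⟨p, q, rfl⟩ := List.append_of_mem (hw b)
    have hpq : b ∉ p ∧ b ∉ q := by
      simp only [List.count_append, List.count_cons_self] at hb
      exact ⟨List.count_eq_zero.1 (by omega), List.count_eq_zero.1 (by omega)⟩
    have : ∑ j : B → ι, wordProd y j (p ++ b :: q) = 0 := by
      rw [← marginalSum_univ _ i, ← Finset.insert_erase (Finset.mem_univ b),
        marginalSum_insert' (by simp)]
      refine Finset.sum_eq_zero fun j _ => ?_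
      simp_rw [wordProd_append, wordProd_cons, wordProd_update _ _ hpq.1,
        wordProd_update _ _ hpq.2, Function.update_self]
      rw [← Finset.mul_sum, ← Finset.sum_mul, hy0]
      simp
    rw [this, zero_apply, inner_zero_left, norm_zero]
    positivity
  · push Not at h1
    obtain _ | ⟨c, w⟩ := w
    · simp at hm
    obtain rfl | ⟨w, b, rfl⟩ := List.eq_nil_or_concat' w
    · simp at hm
    have hm' : w.length = m := by simpa using hm
    set C : Finset B := Finset.univ.erase c with hC
    have key := marginalSum_norm_sq_le hy hS ξ b w C (fun e he => by
      have := h1 e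
      rwa [List.count_cons_of_ne (Finset.ne_of_mem_erase he).symm] at this) i
    have hO : (w ++ [b]).toFinset \ C = insert c ∅ := by
      ext e
      simp only [Finset.mem_sdiff, List.mem_toFinset, hC, Finset.mem_erase, Finset.mem_univ,
        and_true, not_not, insert_empty_eq, Finset.mem_singleton, and_iff_right_iff_imp]
      rintro rfl
      have := h1 e
      rw [List.count_cons_self] at this
      exact List.count_pos_iff.1 (by omega)
    rw [hO, marginalSum_insert' (by simp), marginalSum_empty, hm'] at key
    set V : ι → H := fun a =>
      marginalSum C (fun j => wordProd y j (w ++ [b]) ξ) (Function.update i c a) with hV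
    set q := ∑ a, ‖y a ξ‖ ^ 2 with hq
    have hq0 : 0 ≤ q := by positivity
    have h2 : inner ℂ ((∑ j : B → ι, wordProd y j (c :: (w ++ [b]))) ξ) ξ =
        ∑ a, inner ℂ (V a) (y a ξ) := by
      rw [← marginalSum_univ _ i, ← Finset.insert_erase (Finset.mem_univ c),
        marginalSum_insert (Finset.notMem_erase c _), sum_apply, sum_inner]
      refine Finset.sum_congr rfl fun a _ => ?_
      rw [← hy]
      congr 1
      simp only [hV, marginalSum]
      rw [sum_apply, map_sum]
      refine Finset.sum_congr rfl fun l hl => ?_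
      have := (Finset.mem_filter.1 hl).2 c (Finset.notMem_erase c _)
      simp only [Function.update_self] at this
      rw [wordProd_cons, this]; rfl
    rw [h2]
    have h3 : ‖∑ a, inner ℂ (V a) (y a ξ)‖ ≤ ∑ a, ‖V a‖ * ‖y a ξ‖ :=
      (norm_sum_le _ _).trans (Finset.sum_le_sum fun a _ => norm_inner_le_norm _ _)
    have h4 := Finset.sum_mul_sq_le_sq_mul_sq Finset.univ (fun a => ‖V a‖) (fun a => ‖y a ξ‖)
    refine h3.trans (le_of_sq_le_sq ?_ (by positivity))
    calc _ ≤ _ := h4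
      _ ≤ ((s ^ 2) ^ m * q) * q := mul_le_mul_of_nonneg_right key hq0
      _ = (s ^ m * q) ^ 2 := by ring

end SquareFunction

section Injective

/-- The indicator of injectivity as a signed count of the permutations that stabilize `i`. -/
theorem sum_sign_stabilizer {κ ι : Type*} [Fintype κ] [DecidableEq κ] [DecidableEq ι]
    (i : κ → ι) :
    (∑ σ ∈ Finset.univ.filter fun σ : Equiv.Perm κ => i ∘ σ = i, ((Equiv.Perm.sign σ : ℤˣ) : ℤ)) =
      if Function.Injective i then 1 else 0 := by
  have hdet : Matrix.det (Matrix.of fun a b => if i a = i b then (1 : ℤ) else 0) =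
      ∑ σ ∈ Finset.univ.filter fun σ : Equiv.Perm κ => i ∘ σ = i, ((Equiv.Perm.sign σ : ℤˣ) : ℤ) := by
    rw [Matrix.det_apply', Finset.sum_filter]
    refine Finset.sum_congr rfl fun σ _ => ?_
    simp only [Matrix.of_apply, Finset.prod_ite_zero, Finset.prod_const_one, Finset.mem_univ,
      true_imp_iff, funext_iff, Function.comp_apply, mul_ite, mul_one, mul_zero,
      Int.cast_id]
  rw [← hdet]
  split_ifs with hi
  · convert Matrix.det_one (n := κ) (R := ℤ)
    ext a b
    simp [Matrix.one_apply, hi.eq_iff]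
  · simp only [Function.Injective, not_forall] at hi
    obtain ⟨a, b, hab, hne⟩ := hi
    refine Matrix.det_zero_of_row_eq hne ?_
    ext c
    simp [hab]

theorem sum_injective_eq_sum_perm_s12 {κ ι M : Type*} [Fintype κ] [DecidableEq κ] [Fintype ι]
    [DecidableEq ι] [AddCommGroup M] (G : (κ → ι) → M) :
    (∑ i : κ → ι with Function.Injective i, G i) =
      ∑ σ : Equiv.Perm κ, ((Equiv.Perm.sign σ : ℤˣ) : ℤ) • ∑ i : κ → ι with i ∘ ⇑σ = i, G i := by
  have h : ∀ i : κ → ι, (if Function.Injective i then G i else 0) =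
      ∑ σ : Equiv.Perm κ, if i ∘ σ = i then ((Equiv.Perm.sign σ : ℤˣ) : ℤ) • G i else 0 := by
    intro i
    rw [← Finset.sum_filter, ← Finset.sum_smul, sum_sign_stabilizer]
    split_ifs <;> simp
  rw [Finset.sum_filter, Finset.sum_congr rfl fun i _ => h i, Finset.sum_comm]
  refine Finset.sum_congr rfl fun σ _ => ?_
  rw [Finset.smul_sum, Finset.sum_filter]

variable {ι H : Type*} [Fintype ι] [DecidableEq ι] [NormedAddCommGroup H]
  [InnerProductSpace ℂ H] {y : ι → H →L[ℂ] H} {s : ℝ}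

theorem norm_inner_sum_stabilized_le [Nonempty ι]
    (hy : ∀ a (u v : H), inner ℂ (y a u) v = inner ℂ u (y a v)) (hy0 : ∑ a, y a = 0)
    (hs : 0 ≤ s) (hS : ∀ v, ∑ a, ‖y a v‖ ^ 2 ≤ s ^ 2 * ‖v‖ ^ 2) (ξ : H) (m : ℕ)
    (σ : Equiv.Perm (Fin (m + 2))) :
    ‖inner ℂ ((∑ i : Fin (m + 2) → ι with i ∘ ⇑σ = i,
      wordProd y i (List.finRange (m + 2))) ξ) ξ‖ ≤ s ^ m * ∑ a, ‖y a ξ‖ ^ 2 := by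
  classical
  let B := Quot fun a b => σ a = b
  let _ : Fintype B := Fintype.ofFinite B
  have key := norm_inner_sum_wordProd_le hy hy0 hs hS ξ
    ((List.finRange (m + 2)).map fun t => (Quot.mk _ t : B)) m (by simp) (fun b => by
      obtain ⟨t, rfl⟩ := Quot.exists_rep b
      exact List.mem_map.2 ⟨t, List.mem_finRange t, rfl⟩)
  convert key using 4
  symm
  refine Finset.sum_bij (fun (j : B → ι) _ => fun t => j (Quot.mk _ t)) ?_ ?_ ?_ ?_
  · intro j _
    simp only [Finset.mem_filter, Finset.mem_univ, true_and]
    funext t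
    exact congrArg j (Quot.sound (r := fun a b => σ a = b) rfl).symm
  · intro j _ j' _ h
    funext b
    obtain ⟨t, rfl⟩ := Quot.exists_rep b
    exact congrFun h t
  · intro i hi
    have hi' : i ∘ σ = i := by simpa using hi
    exact ⟨Quot.lift i (by rintro a _ rfl; exact (congrFun hi' a).symm), Finset.mem_univ _, rfl⟩
  · intro j _
    simp [wordProd, Function.comp_def]

theorem norm_inner_sum_injective_le [Nonempty ι]
    (hy : ∀ a (u v : H), inner ℂ (y a u) v = inner ℂ u (y a v)) (hy0 : ∑ a, y a = 0)
    (hs : 0 ≤ s) (hS : ∀ v, ∑ a, ‖y a v‖ ^ 2 ≤ s ^ 2 * ‖v‖ ^ 2) (ξ : H) (m : ℕ) :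
    ‖inner ℂ ((∑ i : Fin (m + 2) → ι with Function.Injective i,
      wordProd y i (List.finRange (m + 2))) ξ) ξ‖ ≤
      (m + 2).factorial * (s ^ m * ∑ a, ‖y a ξ‖ ^ 2) := by
  rw [sum_injective_eq_sum_perm_s12, sum_apply, sum_inner]
  refine (norm_sum_le _ _).trans ((Finset.sum_le_card_nsmul _ _ _ fun σ _ => ?_).trans_eq
    (by rw [Finset.card_univ, Fintype.card_perm, Fintype.card_fin, nsmul_eq_mul]))
  refine le_of_eq_of_le ?_ (norm_inner_sum_stabilized_le hy hy0 hs hS ξ m σ)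
  rcases Int.units_eq_one_or (Equiv.Perm.sign σ) with h | h <;>
    simp [h, -sum_apply]

end Injective

section PermutationAverage

variable {n : ℕ}

theorem card_perm_comp_eq {k : ℕ} {L g : Fin k → Fin n} (hL : Function.Injective L)
    (hg : Function.Injective g) :
    (Finset.univ.filter fun π : Equiv.Perm (Fin n) => ⇑π ∘ L = g).card = (n - k).factorial := by
  have hcard : ∀ g' : Fin k → Fin n, Function.Injective g' →
      (Finset.univ.filter fun π : Equiv.Perm (Fin n) => ⇑π ∘ L = g').card =
      (Finset.univ.filter fun π : Equiv.Perm (Fin n) => ⇑π ∘ L = g).card := by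
    intro g' hg'
    obtain ⟨ρ, hρ⟩ := Equiv.Perm.exists_extending_pair g' g hg' hg
    refine Finset.card_equiv (Equiv.mulLeft ρ) fun π => ?_
    simp only [Finset.mem_filter, Finset.mem_univ, true_and, funext_iff, Function.comp_apply,
      Equiv.coe_mulLeft, Equiv.Perm.mul_apply, ← hρ, ρ.injective.eq_iff]
  have hkn : k ≤ n := by simpa using Fintype.card_le_of_injective L hL
  have hinj : (Finset.univ.filter fun i : Fin k → Fin n => Function.Injective i).card =
      n.descFactorial k := by
    rw [← Fintype.card_subtype, Fintype.card_congr (Equiv.subtypeInjectiveEquivEmbedding _ _),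
      Fintype.card_embedding_eq, Fintype.card_fin, Fintype.card_fin]
  have h := Finset.card_eq_sum_card_fiberwise (s := Finset.univ)
    (t := Finset.univ.filter fun i : Fin k → Fin n => Function.Injective i)
    (f := fun π : Equiv.Perm (Fin n) => ⇑π ∘ L)
    (fun π _ => by simpa using π.injective.comp hL)
  rw [Finset.sum_congr rfl fun g' hg' => hcard g' (Finset.mem_filter.1 hg').2,
    Finset.sum_const, hinj, Finset.card_univ, Fintype.card_perm, Fintype.card_fin, smul_eq_mul,
    mul_comm, ← Nat.factorial_mul_descFactorial hkn] at h
  exact (Nat.eq_of_mul_eq_mul_right (Nat.descFactorial_pos.2 hkn) h).symm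

theorem sum_perm_comp {k : ℕ} {M : Type*} [AddCommMonoid M] {L : Fin k → Fin n}
    (hL : Function.Injective L) (F : (Fin k → Fin n) → M) :
    ∑ π : Equiv.Perm (Fin n), F (π ∘ L) =
      (n - k).factorial • ∑ i : Fin k → Fin n with Function.Injective i, F i := by
  rw [← Finset.sum_fiberwise_of_maps_to (s := Finset.univ)
    (t := Finset.univ.filter fun i : Fin k → Fin n => Function.Injective i)
    (g := fun π : Equiv.Perm (Fin n) => ⇑π ∘ L)
    (fun π _ => by simpa using π.injective.comp hL), Finset.smul_sum]
  refine Finset.sum_congr rfl fun g hg => ?_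
  rw [← card_perm_comp_eq hL (Finset.mem_filter.1 hg).2, ← Finset.sum_const]
  exact Finset.sum_congr rfl fun π hπ => by rw [(Finset.mem_filter.1 hπ).2]

theorem wordProd_comp_get {A : Type*} [Monoid A] {B ι : Type*} (y : ι → A) (j : B → ι)
    (l : List B) : wordProd y (j ∘ l.get) (List.finRange l.length) = wordProd y j l := by
  unfold wordProd
  conv_rhs => rw [← List.map_get_finRange l, List.map_map]
  rfl

theorem sum_perm_wordProd {A : Type*} [Ring A] (y : Fin n → A) {l : List (Fin n)}
    (hl : l.Nodup) {k : ℕ} (hk : l.length = k) :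
    ∑ π : Equiv.Perm (Fin n), wordProd y π l = (n - k).factorial •
      ∑ i : Fin k → Fin n with Function.Injective i, wordProd y i (List.finRange k) := by
  subst hk
  rw [← sum_perm_comp (List.nodup_iff_injective_get.1 hl)]
  simp_rw [wordProd_comp_get]

theorem avgProd_eq_sum_perm {A : Type*} [Ring A] [Module ℝ A] (y : Fin n → A)
    {l : List (Fin n)} (hl : l.Nodup) {k : ℕ} (hk : l.length = k) :
    avgProd n k y = (n.factorial : ℝ)⁻¹ • ∑ π : Equiv.Perm (Fin n), wordProd y π l := by
  rw [sum_perm_wordProd y hl hk, ← Nat.cast_smul_eq_nsmul ℝ, smul_smul, avgProd, mul_comm,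
    ← div_eq_mul_inv]
  rfl

theorem sum_perm_wordProd_one_add {A : Type*} [Ring A] [Module ℝ A] (y : Fin n → A)
    (l₁ l₂ : List (Fin n)) (h : (l₁ ++ l₂).Nodup) :
    (n.factorial : ℝ)⁻¹ • ∑ π : Equiv.Perm (Fin n),
      wordProd y π l₁ * wordProd (fun a => 1 + y a) π l₂ =
      ∑ k ∈ Finset.range (l₂.length + 1), l₂.length.choose k • avgProd n (l₁.length + k) y := by
  induction l₂ generalizing l₁ with
  | nil =>
    rw [List.append_nil] at h
    simp [avgProd_eq_sum_perm y h rfl, wordProd]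
  | cons b l₂ ih =>
    have h1 := ih l₁ (h.sublist (by simp))
    have h2 := ih (l₁ ++ [b]) (by simpa using h)
    have : ∀ π : Equiv.Perm (Fin n),
        wordProd y π l₁ * wordProd (fun a => 1 + y a) π (b :: l₂) =
        wordProd y π l₁ * wordProd (fun a => 1 + y a) π l₂ +
        wordProd y π (l₁ ++ [b]) * wordProd (fun a => 1 + y a) π l₂ := by
      intro π
      have hb : wordProd y π [b] = y (π b) := by simp [wordProd]
      rw [wordProd_append, wordProd_cons, hb]
      noncomm_ring
    simp_rw [this]
    rw [Finset.sum_add_distrib, smul_add, h1, h2, List.length_cons,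
      Finset.sum_range_succ' _ (l₂.length + 1), Finset.sum_range_succ' _ l₂.length]
    simp_rw [Nat.choose_succ_succ, add_smul]
    rw [Finset.sum_add_distrib, Finset.sum_range_succ (fun k => l₂.length.choose (k + 1) • _)]
    simp only [List.length_append, List.length_singleton, Nat.choose_succ_self, zero_smul,
      Nat.choose_zero_right, add_zero, add_assoc, add_comm 1]
    abel

theorem avgProd_one_add {A : Type*} [Ring A] [Module ℝ A] {d : ℕ} (hdn : d ≤ n)
    (y : Fin n → A) :
    avgProd n d (fun a => 1 + y a) = ∑ k ∈ Finset.range (d + 1), d.choose k • avgProd n k y := by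
  have hnd : ((List.finRange d).map (Fin.castLE hdn)).Nodup :=
    (List.nodup_finRange d).map (Fin.castLE_injective hdn)
  have h := sum_perm_wordProd_one_add y [] _ hnd
  simp only [List.length_map, List.length_finRange, List.length_nil, zero_add] at h
  rw [← h, avgProd_eq_sum_perm _ hnd (by simp)]
  simp [wordProd]

theorem isSelfAdjoint_avgProd {A : Type*} [Ring A] [StarRing A] [Module ℝ A] [StarModule ℝ A]
    {d : ℕ} (hdn : d ≤ n) {y : Fin n → A} (hy : ∀ a, IsSelfAdjoint (y a)) :
    IsSelfAdjoint (avgProd n d y) := by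
  have hnd : ((List.finRange d).map (Fin.castLE hdn)).Nodup :=
    (List.nodup_finRange d).map (Fin.castLE_injective hdn)
  have hstar : ∀ (j : Fin n → Fin n) (l : List (Fin n)),
      star (wordProd y j l) = wordProd y j l.reverse := by
    intro j l
    induction l with
    | nil => simp [wordProd]
    | cons b l ih =>
      rw [wordProd_cons, star_mul, ih, (hy _).star_eq, List.reverse_cons, wordProd_append]
      simp [wordProd]
  rw [IsSelfAdjoint]
  conv_rhs => rw [avgProd_eq_sum_perm y (List.nodup_reverse.2 hnd) (by simp)]
  rw [avgProd_eq_sum_perm y hnd (by simp), star_smul, star_sum, star_trivial]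
  simp_rw [hstar]

end PermutationAverage

section LowDegree

variable {n : ℕ} {A : Type*} [Ring A] [Module ℝ A] {y : Fin n → A}

theorem avgProd_zero_s12 : avgProd n 0 y = 1 := by
  have hn : (n.factorial : ℝ) ≠ 0 := by positivity
  rw [avgProd_eq_sum_perm y (l := []) List.nodup_nil List.length_nil]
  simp only [wordProd, List.map_nil, List.prod_nil, Finset.sum_const, Finset.card_univ,
    Fintype.card_perm, Fintype.card_fin]
  rw [← Nat.cast_smul_eq_nsmul ℝ, smul_smul, inv_mul_cancel₀ hn, one_smul]

theorem avgProd_one_s12 (hy0 : ∑ a, y a = 0) : avgProd n 1 y = 0 := by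
  have : ∑ i : Fin 1 → Fin n, ((List.finRange 1).map fun k => y (i k)).prod = ∑ a, y a := by
    rw [← (Equiv.funUnique (Fin 1) (Fin n)).sum_comp]
    simp [List.finRange_succ]
  rw [avgProd, Finset.filter_true_of_mem fun i _ => Function.injective_of_subsingleton i, this,
    hy0, smul_zero]

end LowDegree

theorem sum_injective_two {n : ℕ} {A : Type*} [Ring A] {y : Fin n → A} (hy0 : ∑ a, y a = 0) :
    (∑ i : Fin 2 → Fin n with Function.Injective i, wordProd y i (List.finRange 2)) =
      -∑ a, y a ^ 2 := by
  rw [Finset.sum_filter, ← (finTwoArrowEquiv (Fin n)).symm.sum_comp, Fintype.sum_prod_type,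
    ← Finset.sum_neg_distrib]
  refine Finset.sum_congr rfl fun a _ => ?_
  have hinj : ∀ b, Function.Injective ![a, b] ↔ ¬ a = b := by
    intro b
    rw [Function.Injective]
    simp [Fin.forall_fin_two, eq_comm]
  have hterm : ∀ b, (if Function.Injective ((finTwoArrowEquiv (Fin n)).symm (a, b)) then
      wordProd y ((finTwoArrowEquiv (Fin n)).symm (a, b)) (List.finRange 2) else 0) =
      y a * y b - if a = b then y a * y b else 0 := by
    intro b
    simp only [finTwoArrowEquiv_symm_apply, hinj]
    by_cases h : a = b <;> simp [h, wordProd, List.finRange_succ]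
  rw [Finset.sum_congr rfl fun b _ => hterm b, Finset.sum_sub_distrib, ← Finset.mul_sum, hy0]
  simp [sq]

section Coefficients

theorem descFactorial_div_succ_le {d n : ℕ} (hdn : d ≤ n) (k : ℕ) :
    (d.descFactorial (k + 1) : ℝ) / n.descFactorial (k + 1) ≤
      d.descFactorial k / n.descFactorial k * (d / n) := by
  rw [Nat.descFactorial_succ, Nat.descFactorial_succ, Nat.cast_mul, Nat.cast_mul,
    mul_div_mul_comm, mul_comm]
  refine mul_le_mul_of_nonneg_left ?_ (by positivity)
  rcases le_or_gt d k with h | h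
  · rw [Nat.sub_eq_zero_of_le h, Nat.cast_zero, zero_div]
    positivity
  · have hn : (k : ℝ) < n := by exact_mod_cast h.trans_le hdn
    have hd : (d : ℝ) ≤ n := by exact_mod_cast hdn
    have hk : (0 : ℝ) ≤ k := by positivity
    rw [Nat.cast_sub h.le, Nat.cast_sub (h.le.trans hdn),
      div_le_div_iff₀ (by linarith) (by linarith)]
    nlinarith

theorem descFactorial_div_mul_pow_le {d n : ℕ} (hd : 1 ≤ d) (hdn : d ≤ n) (j : ℕ) :
    (d.descFactorial (j + 2) : ℝ) / n.descFactorial (j + 2) * (n / (3 * d) : ℝ) ^ j ≤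
      d.descFactorial 2 / n.descFactorial 2 * (1 / 3) ^ j := by
  induction j with
  | zero => simp
  | succ j ih =>
    have hd' : (0 : ℝ) < d := by exact_mod_cast hd
    have hn' : (0 : ℝ) < n := by exact_mod_cast hd.trans hdn
    calc _ ≤ (d.descFactorial (j + 2) / n.descFactorial (j + 2) * (d / n) : ℝ) *
          (n / (3 * d) : ℝ) ^ (j + 1) :=
          mul_le_mul_of_nonneg_right (descFactorial_div_succ_le hdn (j + 2)) (by positivity)
      _ = ((d.descFactorial (j + 2) : ℝ) / n.descFactorial (j + 2) * (n / (3 * d) : ℝ) ^ j) *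
          (1 / 3) := by
          rw [pow_succ]; field_simp
      _ ≤ _ := by
          rw [pow_succ, ← mul_assoc]
          exact mul_le_mul_of_nonneg_right ih (by norm_num)

theorem choose_mul_factorial_div {d n k : ℕ} (hk : k ≤ n) :
    (d.choose k : ℝ) * ((n - k).factorial / n.factorial) * k.factorial =
      d.descFactorial k / n.descFactorial k := by
  rw [Nat.descFactorial_eq_factorial_mul_choose d k, ← Nat.factorial_mul_descFactorial hk]
  have h1 : ((n - k).factorial : ℝ) ≠ 0 := by positivity
  have h2 : (n.descFactorial k : ℝ) ≠ 0 := by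
    exact_mod_cast (Nat.descFactorial_pos.2 hk).ne'
  push_cast
  field_simp

theorem sum_pow_third_le (e : ℕ) : ∑ j ∈ Finset.range e, (1 / 3 : ℝ) ^ (j + 1) ≤ 1 / 2 := by
  have : ∑ j ∈ Finset.range e, (1 / 3 : ℝ) ^ (j + 1) = (1 - (1 / 3) ^ e) / 2 := by
    induction e with
    | zero => simp
    | succ e ih => rw [Finset.sum_range_succ, ih]; ring
  have h : (0 : ℝ) ≤ (1 / 3) ^ e := by positivity
  linarith

end Coefficients

section SelfAdjoint

variable {H : Type*} [NormedAddCommGroup H] [InnerProductSpace ℂ H]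

theorem inner_sum_sq_apply_s12 {ι : Type*} [Fintype ι] {y : ι → H →L[ℂ] H}
    (hy : ∀ a (u v : H), inner ℂ (y a u) v = inner ℂ u (y a v)) (ξ : H) :
    inner ℂ ((∑ a, y a ^ 2) ξ) ξ = ((∑ a, ‖y a ξ‖ ^ 2 : ℝ) : ℂ) := by
  rw [sum_apply, sum_inner, Complex.ofReal_sum]
  refine Finset.sum_congr rfl fun a _ => ?_
  rw [sq, mul_apply_eq_comp, hy, inner_self_eq_norm_sq_to_K]
  simp

/-- Subtracting the identity from operators with average `1` does not increase the square
function. -/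
theorem sum_norm_sq_sub_one_le {n : ℕ} {x : Fin n → H →L[ℂ] H}
    (hx : ∀ a (u v : H), inner ℂ (x a u) v = inner ℂ u (x a v))
    (hsum : ∑ i, x i = n • (1 : H →L[ℂ] H)) {s : ℝ}
    (hnorm : Real.sqrt ‖∑ i, x i ^ 2‖ ≤ s) (v : H) :
    ∑ a, ‖(x a - 1) v‖ ^ 2 ≤ s ^ 2 * ‖v‖ ^ 2 := by
  have h1 : ∑ a, ‖x a v‖ ^ 2 ≤ s ^ 2 * ‖v‖ ^ 2 := by
    have h := inner_sum_sq_apply_s12 hx v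
    have h0 : 0 ≤ ∑ a, ‖x a v‖ ^ 2 := by positivity
    calc ∑ a, ‖x a v‖ ^ 2 = ‖inner ℂ ((∑ a, x a ^ 2) v) v‖ := by
          rw [h, Complex.norm_real, Real.norm_of_nonneg h0]
      _ ≤ ‖(∑ a, x a ^ 2) v‖ * ‖v‖ := norm_inner_le_norm _ _
      _ ≤ (‖∑ a, x a ^ 2‖ * ‖v‖) * ‖v‖ := by
          gcongr; exact ContinuousLinearMap.le_opNorm _ _
      _ ≤ (s ^ 2 * ‖v‖) * ‖v‖ := by
          gcongr
          exact (Real.sqrt_le_left ((Real.sqrt_nonneg _).trans hnorm)).1 hnorm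
      _ = s ^ 2 * ‖v‖ ^ 2 := by ring
  have h2 : ∑ a, RCLike.re (inner ℂ (x a v) v) = n * ‖v‖ ^ 2 := by
    rw [← map_sum, ← sum_inner, ← sum_apply, hsum, ← Nat.cast_smul_eq_nsmul ℂ]
    simp [inner_smul_left, inner_self_eq_norm_sq_to_K, ← Complex.ofReal_pow]
  have h3 : ∑ a, ‖(x a - 1) v‖ ^ 2 =
      ∑ a, ‖x a v‖ ^ 2 - 2 * ∑ a, RCLike.re (inner ℂ (x a v) v) + n * ‖v‖ ^ 2 := by
    have : ∀ a, ‖(x a - 1) v‖ ^ 2 =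
        ‖x a v‖ ^ 2 - 2 * RCLike.re (inner ℂ (x a v) v) + ‖v‖ ^ 2 := fun a => by
      rw [sub_apply, one_apply_eq_self, norm_sub_sq (𝕜 := ℂ)]
    simp_rw [this]
    rw [Finset.sum_add_distrib, Finset.sum_sub_distrib, ← Finset.mul_sum]
    simp
  have h4 : 0 ≤ (n : ℝ) * ‖v‖ ^ 2 := by positivity
  rw [h3, h2]
  linarith

end SelfAdjoint

/-- AGM inequality in the order sense: if `x_1, …, x_n` are self-adjoint bounded
operators on a complex Hilbert space with `∑ x_i = n • 1` (so `P_1(x_1,…,x_n) = 1`)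
and `‖(∑ x_i²)^(1/2)‖ ≤ n/(3d)`, then `P_d(x_1,…,x_n) ≤ 1`, i.e.
`1 - P_d(x_1,…,x_n)` is a positive operator. -/
theorem avgProd_le_one_order {H : Type*} [NormedAddCommGroup H]
    [InnerProductSpace ℂ H] [CompleteSpace H] (n d : ℕ) (hd : 1 ≤ d) (hdn : d ≤ n)
    (x : Fin n → H →L[ℂ] H) (hx : ∀ j, IsSelfAdjoint (x j))
    (hsum : ∑ i, x i = n • (1 : H →L[ℂ] H))
    (hnorm : Real.sqrt ‖∑ i, (x i) ^ 2‖ ≤ (n : ℝ) / (3 * d)) :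
    ((1 : H →L[ℂ] H) - avgProd n d x).IsPositive := by
  have hsym : ∀ {T : H →L[ℂ] H}, IsSelfAdjoint T → ∀ u v, inner ℂ (T u) v = inner ℂ u (T v) :=
    fun hT u v => ContinuousLinearMap.isSelfAdjoint_iff_isSymmetric.1 hT u v
  have hone : IsSelfAdjoint (1 : H →L[ℂ] H) := IsSelfAdjoint.one _
  refine ContinuousLinearMap.isPositive_def'.2
    ⟨hone.sub (isSelfAdjoint_avgProd hdn hx), fun ξ => ?_⟩
  have : Nonempty (Fin n) := ⟨⟨0, hd.trans hdn⟩⟩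
  set s : ℝ := n / (3 * d) with hs
  have hs0 : 0 ≤ s := by positivity
  set y : Fin n → H →L[ℂ] H := fun a => x a - 1 with hy_def
  have hy : ∀ a (u v : H), inner ℂ (y a u) v = inner ℂ u (y a v) :=
    fun a => hsym ((hx a).sub hone)
  have hy0 : ∑ a, y a = 0 := by simp [hy_def, hsum]
  have hS : ∀ v, ∑ a, ‖y a v‖ ^ 2 ≤ s ^ 2 * ‖v‖ ^ 2 :=
    sum_norm_sq_sub_one_le (fun a => hsym (hx a)) hsum hnorm
  have hxy : x = fun a => 1 + y a := by funext a; simp [hy_def]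
  set q := ∑ a, ‖y a ξ‖ ^ 2 with hq
  have hq0 : 0 ≤ q := by positivity
  set β : ℝ := d.descFactorial 2 / n.descFactorial 2 with hβ
  have hβ0 : 0 ≤ β := by positivity
  rw [ContinuousLinearMap.reApplyInnerSelf_apply, hxy, avgProd_one_add hdn]
  obtain ⟨e, rfl⟩ : ∃ e, d = e + 1 := ⟨d - 1, by omega⟩
  have hterm : ∀ k, RCLike.re (inner ℂ (((e + 1).choose k • avgProd n k y) ξ) ξ) =
      ((e + 1).choose k : ℝ) * ((n - k).factorial / n.factorial) *
        RCLike.re (inner ℂ ((∑ i : Fin k → Fin n with Function.Injective i,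
          wordProd y i (List.finRange k)) ξ) ξ) := by
    intro k
    rw [← Nat.cast_smul_eq_nsmul ℝ, avgProd, smul_smul, smul_apply, inner_smul_left_eq_smul, RCLike.smul_re]
    rfl
  rw [Finset.sum_range_succ', Finset.sum_range_succ', avgProd_zero_s12, zero_add, avgProd_one_s12 hy0]
  simp only [smul_zero, add_zero, Nat.choose_zero_right, one_smul, sub_add_cancel_right]
  rw [neg_apply, inner_neg_left, map_neg, sum_apply, sum_inner, map_sum]
  simp_rw [add_assoc, one_add_one_eq_two, hterm]
  obtain _ | e := e
  · simp
  rw [Finset.sum_range_succ', zero_add, sum_injective_two hy0, neg_apply, inner_neg_left,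
    inner_sum_sq_apply_s12 hy, ← hq, map_neg]
  have hβ2 : ((e + 1 + 1).choose 2 : ℝ) * ((n - 2).factorial / n.factorial) = β / 2 := by
    rw [hβ, ← choose_mul_factorial_div (by omega)]
    simp
  have htail : ∑ j ∈ Finset.range e, ((e + 1 + 1).choose (j + 1 + 2) : ℝ) *
      ((n - (j + 1 + 2)).factorial / n.factorial) *
        RCLike.re (inner ℂ ((∑ i : Fin (j + 1 + 2) → Fin n with Function.Injective i,
          wordProd y i (List.finRange (j + 1 + 2))) ξ) ξ) ≤
      ∑ j ∈ Finset.range e, β * q * (1 / 3) ^ (j + 1) := by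
    refine Finset.sum_le_sum fun j hj => ?_
    have hj' : j + 1 + 2 ≤ n := by have := Finset.mem_range.1 hj; omega
    calc _ ≤ ((e + 1 + 1).choose (j + 1 + 2) : ℝ) *
          ((n - (j + 1 + 2)).factorial / n.factorial) *
            ((j + 1 + 2).factorial * (s ^ (j + 1) * q)) := by
          gcongr
          exact (RCLike.re_le_norm _).trans (norm_inner_sum_injective_le hy hy0 hs0 hS ξ (j + 1))
      _ = (((e + 1 + 1).descFactorial (j + 1 + 2) : ℝ) / n.descFactorial (j + 1 + 2) *
            s ^ (j + 1)) * q := by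
          rw [← choose_mul_factorial_div hj']; ring
      _ ≤ (β * (1 / 3) ^ (j + 1)) * q := by
          exact mul_le_mul_of_nonneg_right (descFactorial_div_mul_pow_le hd hdn (j + 1)) hq0
      _ = _ := by ring
  rw [← Finset.mul_sum] at htail
  have hgeom := mul_le_mul_of_nonneg_left (sum_pow_third_le e) (mul_nonneg hβ0 hq0)
  rw [hβ2]
  simp only [RCLike.re_eq_complex_re, Complex.ofReal_re] at htail ⊢
  linarith
end
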